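/- arXiv:2402.06279 — 6 statements merged into one kernel-verified Lean document; each statement's English description precedes it below -/
import Mathlib

section
/- Let A be a bounded self-adjoint operator on a Hilbert space H and B a bounded self-adjoint operator on a Hilbert space K. Then the spectrum of A ⊗ B equals {xy : x ∈ σ(A), y ∈ σ(B)}. -/
open scoped InnerProductSpace

theorem approx_eigen {H : Type*} [NormedAddCommGroup H] [InnerProductSpace ℂ H] [CompleteSpace H]
    (A : H →L[ℂ] H) (hA : IsSelfAdjoint A) {x : ℂ} (hx : x ∈ spectrum ℂ A)
    {ε : ℝ} (hε : 0 < ε) : ∃ u : H, ‖u‖ = 1 ∧ ‖x • u - A u‖ < ε := by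
  by_contra! hcon
  apply hx
  set D : H →L[ℂ] H := algebraMap ℂ (H →L[ℂ] H) x - A with hD
  have hDapp : ∀ v, D v = x • v - A v := by
    intro v; simp [hD, Algebra.algebraMap_eq_smul_one]
  have hb : ∀ v, ‖v‖ ≤ ε⁻¹ * ‖D v‖ := by
    intro v
    by_cases hv : v = 0
    · simp [hv]
    have hv' : 0 < ‖v‖ := norm_pos_iff.mpr hv
    have h1 := hcon (((‖v‖⁻¹ : ℝ) : ℂ) • v) (by
      rw [norm_smul]; simp [hv'.ne'])
    rw [← hDapp, map_smul, norm_smul] at h1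
    simp only [Complex.norm_real, norm_inv, norm_norm] at h1
    rw [inv_mul_eq_div, le_div_iff₀ hv'] at h1
    rw [inv_mul_eq_div, le_div_iff₀ hε]
    linarith
  have hanti : AntilipschitzWith (⟨ε⁻¹, by positivity⟩ : NNReal) D :=
    D.antilipschitz_of_bound hb
  have hsa : IsSelfAdjoint D := by
    rw [hA.mem_spectrum_eq_re hx] at hD
    rw [hD]
    refine IsSelfAdjoint.sub ?_ hA
    refine IsSelfAdjoint.algebraMap _ ?_
    simp [IsSelfAdjoint]
  change IsUnit D
  rw [ContinuousLinearMap.isUnit_iff_bijective,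
    ContinuousLinearMap.bijective_iff_dense_range_and_antilipschitz]
  refine ⟨?_, _, hanti⟩
  rw [Submodule.topologicalClosure_eq_top_iff, ContinuousLinearMap.orthogonal_range]
  rw [ContinuousLinearMap.isSelfAdjoint_iff'.mp hsa]
  exact LinearMap.ker_eq_bot.mpr hanti.injective

theorem spectrum_mul_of_commute {R : Type*} [NormedRing R] [NormedAlgebra ℂ R] [CompleteSpace R]
    (P Q : R) (h : P * Q = Q * P) {z : ℂ} (hz : z ∈ spectrum ℂ (P * Q)) :
    ∃ x ∈ spectrum ℂ P, ∃ y ∈ spectrum ℂ Q, z = x * y := by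
  set S : Subalgebra ℂ R := Subalgebra.centralizer ℂ (Set.centralizer {P, Q}) with hS
  have hsub : ({P, Q} : Set R) ⊆ S := Set.subset_centralizer_centralizer
  have hcomm : ∀ a b : S, a * b = b * a := by
    intro a b
    apply Subtype.ext
    refine Set.centralizer_centralizer_comm_of_comm (S := {P, Q}) ?_ a.1 a.2 b.1 b.2
    rintro x (rfl | rfl) y (rfl | rfl) <;> simp [h]
  let _ : NormedCommRing S := { (inferInstance : NormedRing S) with mul_comm := hcomm }
  have : CompleteSpace S :=
    IsClosed.completeSpace_coe (hs := (Set.isClosed_centralizer _ : IsClosed (S : Set R)))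
  let p : S := ⟨P, hsub (by simp)⟩
  let q : S := ⟨Q, hsub (by simp)⟩
  have hunit : ∀ a : S, IsUnit (a : R) → IsUnit a := by
    rintro a ⟨u, hu⟩
    have hmem : ((u⁻¹ : Rˣ) : R) ∈ S := by
      intro c hc
      have h1 : Commute c (u : R) := by rw [hu]; exact a.2 c hc
      exact h1.units_inv_right
    refine isUnit_iff_exists.mpr ⟨⟨_, hmem⟩, ?_, ?_⟩ <;> apply Subtype.ext
    · change (a : R) * _ = 1
      rw [← hu]; simp
    · change _ * (a : R) = 1
      rw [← hu]; simp
  have hspec : ∀ a : S, spectrum ℂ a = spectrum ℂ (a : R) := by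
    intro a
    ext w
    simp only [spectrum.mem_iff, not_iff_not]
    exact ⟨fun hw => hw.map S.val, fun hw => hunit _ hw⟩
  have hz' : z ∈ spectrum ℂ (p * q) := by
    rw [hspec]; exact hz
  obtain ⟨f, hf⟩ := WeakDual.CharacterSpace.mem_spectrum_iff_exists.mp hz'
  refine ⟨f p, ?_, f q, ?_, ?_⟩
  · rw [show P = (p : R) from rfl, ← hspec]
    exact AlgHom.apply_mem_spectrum f p
  · rw [show Q = (q : R) from rfl, ← hspec]
    exact AlgHom.apply_mem_spectrum f q
  · rw [← hf, map_mul]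

section Tensor
open TensorProduct

variable {H K HK : Type*}
    [NormedAddCommGroup H] [InnerProductSpace ℂ H]
    [NormedAddCommGroup K] [InnerProductSpace ℂ K]
    [NormedAddCommGroup HK] [InnerProductSpace ℂ HK]
    (tmul : H →ₗ[ℂ] K →ₗ[ℂ] HK)

theorem tmul_clm_ext
    (hdense : Dense (Submodule.span ℂ {z : HK | ∃ h k, z = tmul h k} : Set HK))
    {S T : HK →L[ℂ] HK} (h : ∀ a b, S (tmul a b) = T (tmul a b)) : S = T := by
  apply ContinuousLinearMap.ext_on hdense
  rintro _ ⟨a, b, rfl⟩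
  exact h a b

theorem exists_tensor_clm [CompleteSpace HK]
    (hinner : ∀ (h h' : H) (k k' : K),
      ⟪tmul h k, tmul h' k'⟫_ℂ = ⟪h, h'⟫_ℂ * ⟪k, k'⟫_ℂ)
    (hdense : Dense (Submodule.span ℂ {z : HK | ∃ h k, z = tmul h k} : Set HK))
    (S : H →L[ℂ] H) (T : K →L[ℂ] K) :
    ∃ D : HK →L[ℂ] HK, ∀ h k, D (tmul h k) = tmul (S h) (T k) := by
  let e₀ : H ⊗[ℂ] K →ₗ[ℂ] HK := TensorProduct.lift tmul
  have hin : ∀ x y, ⟪e₀ x, e₀ y⟫_ℂ = ⟪x, y⟫_ℂ := by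
    intro x y
    induction x using TensorProduct.induction_on with
    | zero => simp
    | add a b ha hb => simp [inner_add_left, ha, hb]
    | tmul a b =>
      induction y using TensorProduct.induction_on with
      | zero => simp
      | add c d hc hd => simp only [map_add, inner_add_right, hc, hd]
      | tmul c d => simp [e₀, hinner]
  let e : H ⊗[ℂ] K →ₗᵢ[ℂ] HK := e₀.isometryOfInner hin
  have he : ∀ h k, e (h ⊗ₜ k) = tmul h k := fun h k => by simp [e, e₀]
  have hd : DenseRange e.toContinuousLinearMap := by
    refine hdense.mono ?_
    have : Submodule.span ℂ {z : HK | ∃ h k, z = tmul h k} ≤ LinearMap.range e.toLinearMap := by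
      rw [Submodule.span_le]
      rintro _ ⟨h, k, rfl⟩
      exact ⟨h ⊗ₜ k, he h k⟩
    exact this
  have hu : IsUniformInducing e.toContinuousLinearMap := e.isometry.isUniformInducing
  refine ⟨(e.toContinuousLinearMap ∘L TensorProduct.mapL S T).extend e.toContinuousLinearMap,
    fun h k => ?_⟩
  have := ContinuousLinearMap.extend_eq (e.toContinuousLinearMap ∘L TensorProduct.mapL S T)
    hd hu (h ⊗ₜ k)
  simpa [he] using this

end Tensor


/-- The spectrum of `A ⊗ B` on the Hilbert tensor product `H ⊗ K`
(presented as a Hilbert space `HK` with an elementary-tensor map `tmul` having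
dense span and the product inner product) is the product set of the spectra. -/
theorem spectrum_tensor_prod
    {H K HK : Type*}
    [NormedAddCommGroup H] [InnerProductSpace ℂ H] [CompleteSpace H] [Nontrivial H]
    [NormedAddCommGroup K] [InnerProductSpace ℂ K] [CompleteSpace K] [Nontrivial K]
    [NormedAddCommGroup HK] [InnerProductSpace ℂ HK] [CompleteSpace HK]
    (tmul : H →ₗ[ℂ] K →ₗ[ℂ] HK)
    (hinner : ∀ (h h' : H) (k k' : K),
      ⟪tmul h k, tmul h' k'⟫_ℂ = ⟪h, h'⟫_ℂ * ⟪k, k'⟫_ℂ)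
    (hdense : Dense (Submodule.span ℂ {z : HK | ∃ h k, z = tmul h k} : Set HK))
    (A : H →L[ℂ] H) (hA : IsSelfAdjoint A)
    (B : K →L[ℂ] K) (hB : IsSelfAdjoint B)
    (C : HK →L[ℂ] HK)
    (hC : ∀ (h : H) (k : K), C (tmul h k) = tmul (A h) (B k)) :
    spectrum ℂ C =
      {z : ℂ | ∃ x ∈ spectrum ℂ A, ∃ y ∈ spectrum ℂ B, z = x * y} := by
  have hext := fun {S T : HK →L[ℂ] HK} => tmul_clm_ext tmul hdense (S := S) (T := T)
  have hex := exists_tensor_clm tmul hinner hdense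
  have hnorm : ∀ h k, ‖tmul h k‖ = ‖h‖ * ‖k‖ := by
    intro h k
    have h1 := hinner h h k k
    simp only [inner_self_eq_norm_sq_to_K] at h1
    norm_cast at h1
    rw [← mul_pow] at h1
    exact (pow_left_inj₀ (norm_nonneg _) (by positivity) two_ne_zero).mp h1
  ext z
  constructor
  · intro hz
    obtain ⟨P, hP⟩ := hex A 1
    obtain ⟨Q, hQ⟩ := hex 1 B
    have hPQ : C = P * Q := hext fun a b => by simp [hP, hQ, hC]
    have hQP : P * Q = Q * P := hext fun a b => by simp [hP, hQ]
    rw [hPQ] at hz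
    obtain ⟨x, hx, y, hy, rfl⟩ := spectrum_mul_of_commute P Q hQP hz
    refine ⟨x, ?_, y, ?_, rfl⟩
    · intro hu
      apply hx
      obtain ⟨R, hR1, hR2⟩ := isUnit_iff_exists.mp hu
      obtain ⟨R', hR'⟩ := hex R 1
      refine isUnit_iff_exists.mpr ⟨R', ?_, ?_⟩
      · refine hext fun a b => ?_
        have := DFunLike.congr_fun hR1 a
        simp [Algebra.algebraMap_eq_smul_one] at this
        simp [Algebra.algebraMap_eq_smul_one, hR', hP]
        rw [← LinearMap.smul_apply, ← map_smul, ← LinearMap.sub_apply, ← map_sub, this]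
      · refine hext fun a b => ?_
        have := DFunLike.congr_fun hR2 a
        simp [Algebra.algebraMap_eq_smul_one] at this
        simp [Algebra.algebraMap_eq_smul_one, hR', hP]
        rw [← LinearMap.smul_apply, ← map_smul, ← LinearMap.sub_apply, ← map_sub, this]
    · intro hu
      apply hy
      obtain ⟨R, hR1, hR2⟩ := isUnit_iff_exists.mp hu
      obtain ⟨R', hR'⟩ := hex 1 R
      refine isUnit_iff_exists.mpr ⟨R', ?_, ?_⟩
      · refine hext fun a b => ?_
        have := DFunLike.congr_fun hR1 b
        simp [Algebra.algebraMap_eq_smul_one] at this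
        simp [Algebra.algebraMap_eq_smul_one, hR', hQ]
        rw [← map_smul, ← map_sub, this]
      · refine hext fun a b => ?_
        have := DFunLike.congr_fun hR2 b
        simp [Algebra.algebraMap_eq_smul_one] at this
        simp [Algebra.algebraMap_eq_smul_one, hR', hQ]
        rw [← map_smul, ← map_sub, this]
  · rintro ⟨x, hx, y, hy, rfl⟩ hu
    rw [spectrum.mem_resolventSet_iff, ContinuousLinearMap.isUnit_iff_bijective,
      ContinuousLinearMap.bijective_iff_dense_range_and_antilipschitz] at hu
    obtain ⟨-, c, hc⟩ := hu
    have hb := ContinuousLinearMap.bound_of_antilipschitz _ hc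
    set M : ℝ := ‖x‖ + ‖B‖ + 1 with hM
    have hMpos : 0 < M := by positivity
    have hcpos : (0 : ℝ) < c + 1 := by positivity
    set ε : ℝ := 1 / ((c + 1) * M) with hε
    have hεpos : 0 < ε := by positivity
    obtain ⟨u, hu1, hu2⟩ := approx_eigen A hA hx hεpos
    obtain ⟨v, hv1, hv2⟩ := approx_eigen B hB hy hεpos
    have h1 := hb (tmul u v)
    have heq : (algebraMap ℂ (HK →L[ℂ] HK) (x * y) - C) (tmul u v)
        = tmul (x • u) (y • v - B v) + tmul (x • u - A u) (B v) := by
      simp [Algebra.algebraMap_eq_smul_one, hC, mul_smul, smul_sub]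
    rw [heq, hnorm, hu1, hv1] at h1
    have h2 := norm_add_le (tmul (x • u) (y • v - B v)) (tmul (x • u - A u) (B v))
    rw [hnorm, hnorm, norm_smul, hu1] at h2
    have h3 : ‖B v‖ ≤ ‖B‖ := by simpa [hv1] using B.le_opNorm v
    have h4 : ‖x‖ * 1 * ‖y • v - B v‖ ≤ ‖x‖ * ε := by
      rw [mul_one]; gcongr
    have h5 : ‖x • u - A u‖ * ‖B v‖ ≤ ε * ‖B‖ := by gcongr
    have h6 : ‖tmul (x • u) (y • v - B v) + tmul (x • u - A u) (B v)‖ < ε * M := by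
      rw [hM]; nlinarith
    have h7 : ε * M * (c + 1) = 1 := by
      rw [hε]; field_simp
    have h8 : (c : ℝ) * ‖tmul (x • u) (y • v - B v) + tmul (x • u - A u) (B v)‖ ≤ c * (ε * M) := by
      gcongr
    have : 0 < ε * M := by positivity
    nlinarith
end

section
/- Let A be a bounded self-adjoint operator on H and B a bounded self-adjoint operator on K. Then the spectrum of A ⊗ id + id ⊗ B + A ⊗ B equals {x + y + xy : x ∈ σ(A), y ∈ σ(B)}. -/
open scoped InnerProductSpace

namespace TensorSpec

open scoped TensorProduct

/-- Commuting elements of a complex Banach algebra: spectral mapping for `x + y + x y`. -/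
lemma banach_spec {R : Type*} [NormedRing R] [NormedAlgebra ℂ R] [CompleteSpace R]
    (a b : R) (hab : a * b = b * a) (z : ℂ) (hz : z ∈ spectrum ℂ (a + b + a * b)) :
    ∃ x ∈ spectrum ℂ a, ∃ y ∈ spectrum ℂ b, z = x + y + x * y := by
  let M : Subalgebra ℂ R := Subalgebra.centralizer ℂ (Set.centralizer {a, b})
  have hcomm : ∀ x ∈ M, ∀ y ∈ M, x * y = y * x := by
    apply Set.centralizer_centralizer_comm_of_comm
    rintro x (rfl | rfl) y (rfl | rfl) <;> simp [hab]
  have hclosed : IsClosed (M : Set R) := Set.isClosed_centralizer _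
  have : CompleteSpace M := hclosed.completeSpace_coe
  letI : NormedCommRing M :=
    { (inferInstance : NormedRing M) with
      mul_comm := fun x y => Subtype.ext (hcomm x x.2 y y.2) }
  have ha : a ∈ M := Set.subset_centralizer_centralizer (by simp)
  have hb : b ∈ M := Set.subset_centralizer_centralizer (by simp)
  -- inverse closedness
  have hinv : ∀ (m : M) (x : ℂ), x ∈ spectrum ℂ m → x ∈ spectrum ℂ (m : R) := by
    intro m x hx hu
    apply hx
    obtain ⟨u, hu⟩ := hu
    have huM : (u : R) ∈ M := by
      rw [hu]; exact M.sub_mem (M.algebraMap_mem x) m.2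
    have hvM : ((u⁻¹ : Rˣ) : R) ∈ M := by
      rw [Subalgebra.mem_centralizer_iff] at huM ⊢
      intro g hg
      have : Commute g (u : R) := huM g hg
      exact (this.units_inv_right).eq
    refine ⟨⟨⟨u, huM⟩, ⟨_, hvM⟩, Subtype.ext (by simp), Subtype.ext (by simp)⟩, Subtype.ext hu⟩
  let a' : M := ⟨a, ha⟩
  let b' : M := ⟨b, hb⟩
  have hz' : z ∈ spectrum ℂ (a' + b' + a' * b') :=
    AlgHom.spectrum_apply_subset M.val (a' + b' + a' * b') hz
  obtain ⟨f, hf⟩ := WeakDual.CharacterSpace.mem_spectrum_iff_exists.1 hz'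
  refine ⟨f a', hinv a' _ (AlgHom.apply_mem_spectrum f a'), f b',
    hinv b' _ (AlgHom.apply_mem_spectrum f b'), ?_⟩
  rw [← hf, map_add, map_add, map_mul]

lemma approx_eigen {H : Type*} [NormedAddCommGroup H] [InnerProductSpace ℂ H] [CompleteSpace H]
    (A : H →L[ℂ] H) (hA : IsSelfAdjoint A) (x : ℂ) (hx : x ∈ spectrum ℂ A)
    (ε : ℝ) (hε : 0 < ε) : ∃ h : H, ‖h‖ = 1 ∧ ‖A h - x • h‖ < ε := by
  by_contra! hcon
  apply hx
  set T : H →L[ℂ] H := algebraMap ℂ (H →L[ℂ] H) x - A with hT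
  have hTapp : ∀ h, T h = x • h - A h := fun h => by
    simp [hT, Algebra.algebraMap_eq_smul_one]
  have hbound : ∀ h, ε * ‖h‖ ≤ ‖T h‖ := by
    intro h
    by_cases h0 : h = 0
    · simp [h0]
    have hn : 0 < ‖h‖ := norm_pos_iff.2 h0
    have := hcon ((‖h‖⁻¹ : ℂ) • h) (by simp [norm_smul, hn.ne'])
    rw [map_smul, smul_comm x, ← smul_sub, norm_smul] at this
    rw [hTapp, norm_sub_rev]
    simp only [norm_inv, Complex.norm_real, norm_norm] at this
    rwa [inv_mul_eq_div, le_div_iff₀ hn] at this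
  have hnorm : IsStarNormal T := by
    refine ⟨?_⟩
    have : star T = algebraMap ℂ (H →L[ℂ] H) (star x) - A := by
      rw [hT, star_sub, hA.star_eq, algebraMap_star_comm]
    rw [this, hT]
    have h1 := Algebra.commutes (star x) A
    have h2 := Algebra.commutes x A
    have h3 := Algebra.commutes x (algebraMap ℂ (H →L[ℂ] H) (star x))
    unfold Commute SemiconjBy
    simp only [sub_mul, mul_sub, h1, h2, h3]
    abel
  show IsUnit T
  rw [ContinuousLinearMap.isUnit_iff_bijective,
    ContinuousLinearMap.bijective_iff_dense_range_and_antilipschitz]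
  refine ⟨?_, ⟨⟨ε⁻¹, by positivity⟩, T.antilipschitz_of_bound fun h => ?_⟩⟩
  · rw [Submodule.topologicalClosure_eq_top_iff,
      ContinuousLinearMap.IsStarNormal.orthogonal_range hnorm, Submodule.eq_bot_iff]
    intro h hh
    have h0 : T h = 0 := hh
    have := hbound h
    rw [h0, norm_zero] at this
    have : ‖h‖ ≤ 0 := by
      by_contra! hc
      nlinarith [mul_pos hε hc]
    exact norm_le_zero_iff.1 this
  · have := hbound h
    show ‖h‖ ≤ ε⁻¹ * ‖T h‖
    rw [inv_mul_eq_div, le_div_iff₀ hε]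
    linarith

section

variable {H K HK : Type*}
    [NormedAddCommGroup H] [InnerProductSpace ℂ H]
    [NormedAddCommGroup K] [InnerProductSpace ℂ K]
    [NormedAddCommGroup HK] [InnerProductSpace ℂ HK]

lemma lift_norm (tmul : H →ₗ[ℂ] K →ₗ[ℂ] HK)
    (hinner : ∀ (h h' : H) (k k' : K),
      ⟪tmul h k, tmul h' k'⟫_ℂ = ⟪h, h'⟫_ℂ * ⟪k, k'⟫_ℂ) (x : H ⊗[ℂ] K) :
    ‖TensorProduct.lift tmul x‖ = ‖x‖ := by
  have key : ∀ x y : H ⊗[ℂ] K,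
      ⟪TensorProduct.lift tmul x, TensorProduct.lift tmul y⟫_ℂ = ⟪x, y⟫_ℂ := by
    intro x y
    induction x using TensorProduct.induction_on with
    | zero => simp
    | add x₁ x₂ h₁ h₂ => simp only [map_add, inner_add_left, h₁, h₂]
    | tmul h k =>
      induction y using TensorProduct.induction_on with
      | zero => simp
      | add x₁ x₂ h₁ h₂ => simp only [map_add, inner_add_right, h₁, h₂]
      | tmul h' k' => simp [hinner]
  exact ((TensorProduct.lift tmul).isometryOfInner key).norm_map x

lemma dense_lift (tmul : H →ₗ[ℂ] K →ₗ[ℂ] HK)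
    (hdense : Dense (Submodule.span ℂ {z : HK | ∃ h k, z = tmul h k} : Set HK)) :
    DenseRange (TensorProduct.lift tmul) := by
  refine hdense.mono ?_
  have : Submodule.span ℂ {z : HK | ∃ h k, z = tmul h k} ≤
      LinearMap.range (TensorProduct.lift tmul) := by
    rw [Submodule.span_le]
    rintro z ⟨h, k, rfl⟩
    exact ⟨h ⊗ₜ k, by simp⟩
  exact this

lemma clm_ext (tmul : H →ₗ[ℂ] K →ₗ[ℂ] HK)
    (hdense : Dense (Submodule.span ℂ {z : HK | ∃ h k, z = tmul h k} : Set HK))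
    (S T : HK →L[ℂ] HK) (hST : ∀ h k, S (tmul h k) = T (tmul h k)) : S = T := by
  refine ContinuousLinearMap.ext_on hdense ?_
  rintro z ⟨h, k, rfl⟩
  exact hST h k

lemma exists_left [CompleteSpace H] [CompleteSpace HK] (tmul : H →ₗ[ℂ] K →ₗ[ℂ] HK)
    (hinner : ∀ (h h' : H) (k k' : K),
      ⟪tmul h k, tmul h' k'⟫_ℂ = ⟪h, h'⟫_ℂ * ⟪k, k'⟫_ℂ)
    (hdense : Dense (Submodule.span ℂ {z : HK | ∃ h k, z = tmul h k} : Set HK))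
    (S : H →L[ℂ] H) : ∃ S' : HK →L[ℂ] HK, ∀ h k, S' (tmul h k) = tmul (S h) k := by
  have hS : S ∈ Submodule.span ℂ (unitary (H →L[ℂ] H) : Set (H →L[ℂ] H)) := by
    rw [CStarAlgebra.span_unitary]; trivial
  induction hS using Submodule.span_induction with
  | zero => exact ⟨0, by simp⟩
  | add x y _ _ hx hy =>
    obtain ⟨X, hX⟩ := hx
    obtain ⟨Y, hY⟩ := hy
    exact ⟨X + Y, by simp [hX, hY]⟩
  | smul c x _ hx =>
    obtain ⟨X, hX⟩ := hx
    exact ⟨c • X, by simp [hX]⟩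
  | mem u hu =>
    let t' : H →ₗ[ℂ] K →ₗ[ℂ] HK := tmul ∘ₗ (u : H →ₗ[ℂ] H)
    have ht' : ∀ (h h' : H) (k k' : K),
        ⟪t' h k, t' h' k'⟫_ℂ = ⟪h, h'⟫_ℂ * ⟪k, k'⟫_ℂ := by
      intro h h' k k'
      simp [t', hinner, ContinuousLinearMap.inner_map_map_of_mem_unitary hu]
    refine ⟨(TensorProduct.lift t').extendOfNorm (TensorProduct.lift tmul), fun h k => ?_⟩
    have := LinearMap.extendOfNorm_eq (f := TensorProduct.lift t') (dense_lift tmul hdense)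
      ⟨1, fun x => by rw [lift_norm _ ht', lift_norm _ hinner, one_mul]⟩ (h ⊗ₜ k)
    simpa [t'] using this

lemma exists_left_spec [CompleteSpace H] [CompleteSpace HK] (tmul : H →ₗ[ℂ] K →ₗ[ℂ] HK)
    (hinner : ∀ (h h' : H) (k k' : K),
      ⟪tmul h k, tmul h' k'⟫_ℂ = ⟪h, h'⟫_ℂ * ⟪k, k'⟫_ℂ)
    (hdense : Dense (Submodule.span ℂ {z : HK | ∃ h k, z = tmul h k} : Set HK))
    (S : H →L[ℂ] H) : ∃ S' : HK →L[ℂ] HK, (∀ h k, S' (tmul h k) = tmul (S h) k) ∧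
      spectrum ℂ S' ⊆ spectrum ℂ S := by
  obtain ⟨S', hS'⟩ := exists_left tmul hinner hdense S
  refine ⟨S', hS', fun x hx hu => hx ?_⟩
  obtain ⟨u, hu⟩ := hu
  obtain ⟨R, hR⟩ := exists_left tmul hinner hdense ((u⁻¹ : (H →L[ℂ] H)ˣ) : H →L[ℂ] H)
  have h1 : ∀ h, (u : H →L[ℂ] H) h = x • h - S h := fun h => by
    rw [hu]; simp [Algebra.algebraMap_eq_smul_one]
  have h2 : ∀ h k, (algebraMap ℂ (HK →L[ℂ] HK) x - S') (tmul h k) =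
      tmul ((u : H →L[ℂ] H) h) k := fun h k => by
    simp [Algebra.algebraMap_eq_smul_one, h1, hS']
  have h3 : ∀ h, (u : H →L[ℂ] H) ((u⁻¹ : (H →L[ℂ] H)ˣ).val h) = h := fun h => by
    rw [← ContinuousLinearMap.mul_apply, Units.mul_inv]; rfl
  have h4 : ∀ h, (u⁻¹ : (H →L[ℂ] H)ˣ).val ((u : H →L[ℂ] H) h) = h := fun h => by
    rw [← ContinuousLinearMap.mul_apply, Units.inv_mul]; rfl
  refine ⟨⟨algebraMap ℂ (HK →L[ℂ] HK) x - S', R, ?_, ?_⟩, rfl⟩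
  · refine clm_ext tmul hdense _ _ fun h k => ?_
    rw [ContinuousLinearMap.mul_apply, hR, h2, h3]; rfl
  · refine clm_ext tmul hdense _ _ fun h k => ?_
    rw [ContinuousLinearMap.mul_apply, h2, hR, h4]; rfl

end

end TensorSpec


/-- The spectrum of `A ⊗ id + id ⊗ B + A ⊗ B` on the Hilbert tensor product `H ⊗ K`
(presented as a Hilbert space `HK` with an elementary-tensor map `tmul` having
dense span and the product inner product) is the sum set of the spectra. -/
theorem spectrum_tensor_sum_add_prod
    {H K HK : Type*}
    [NormedAddCommGroup H] [InnerProductSpace ℂ H] [CompleteSpace H] [Nontrivial H]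
    [NormedAddCommGroup K] [InnerProductSpace ℂ K] [CompleteSpace K] [Nontrivial K]
    [NormedAddCommGroup HK] [InnerProductSpace ℂ HK] [CompleteSpace HK]
    (tmul : H →ₗ[ℂ] K →ₗ[ℂ] HK)
    (hinner : ∀ (h h' : H) (k k' : K),
      ⟪tmul h k, tmul h' k'⟫_ℂ = ⟪h, h'⟫_ℂ * ⟪k, k'⟫_ℂ)
    (hdense : Dense (Submodule.span ℂ {z : HK | ∃ h k, z = tmul h k} : Set HK))
    (A : H →L[ℂ] H) (hA : IsSelfAdjoint A)
    (B : K →L[ℂ] K) (hB : IsSelfAdjoint B)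
    (C : HK →L[ℂ] HK)
    (hC : ∀ (h : H) (k : K), C (tmul h k) = tmul (A h) k + tmul h (B k) + tmul (A h) (B k)) :
    spectrum ℂ C =
      {z : ℂ | ∃ x ∈ spectrum ℂ A, ∃ y ∈ spectrum ℂ B, z = x + y + x * y} := by
  have hnt : ∀ h k, ‖tmul h k‖ = ‖h‖ * ‖k‖ := fun h k => by
    have := TensorSpec.lift_norm tmul hinner (TensorProduct.tmul ℂ h k)
    simpa using this
  apply Set.Subset.antisymm
  · intro z hz
    obtain ⟨a, ha, has⟩ := TensorSpec.exists_left_spec tmul hinner hdense A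
    obtain ⟨b, hb, hbs⟩ := TensorSpec.exists_left_spec tmul.flip
      (fun h h' k k' => by simp [hinner, mul_comm])
      (by
        convert hdense using 3
        ext z
        exact ⟨fun ⟨k, h, e⟩ => ⟨h, k, e⟩, fun ⟨h, k, e⟩ => ⟨k, h, e⟩⟩) B
    simp only [LinearMap.flip_apply] at hb
    have hab : a * b = b * a := TensorSpec.clm_ext tmul hdense _ _ fun h k => by
      simp [ha, hb]
    have hCab : C = a + b + a * b := TensorSpec.clm_ext tmul hdense _ _ fun h k => by
      simp [ha, hb, hC]
    rw [hCab] at hz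
    obtain ⟨x, hx, y, hy, e⟩ := TensorSpec.banach_spec a b hab z hz
    exact ⟨x, has hx, y, hbs (by simpa using hy), e⟩
  · rintro z ⟨x, hx, y, hy, rfl⟩ ⟨u, hu⟩
    set z := x + y + x * y with hz
    set R : HK →L[ℂ] HK := (u⁻¹ : (HK →L[ℂ] HK)ˣ).val with hR
    set M : ℝ := 2 + ‖B‖ + ‖x‖ with hM
    have hMpos : 0 < M := by positivity
    set ε : ℝ := (‖R‖ * M + 1)⁻¹ with hε
    have hεpos : 0 < ε := by positivity
    obtain ⟨h, hh, hAh⟩ := TensorSpec.approx_eigen A hA x hx ε hεpos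
    obtain ⟨k, hk, hBk⟩ := TensorSpec.approx_eigen B hB y hy ε hεpos
    set t := tmul h k with ht
    have hRt : R (z • t - C t) = t := by
      have : z • t - C t = u.val t := by
        rw [hu]; simp [Algebra.algebraMap_eq_smul_one]
      rw [this, hR, ← ContinuousLinearMap.mul_apply, Units.inv_mul]; rfl
    have hdecomp : C t - z • t = tmul (A h - x • h) k + tmul h (B k - y • k)
        + tmul (A h - x • h) (B k) + x • tmul h (B k - y • k) := by
      rw [ht, hC, hz]
      simp only [map_sub, LinearMap.sub_apply, map_smul, LinearMap.smul_apply]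
      module
    have hBk1 : ‖B k‖ ≤ ‖B‖ := by simpa [hk] using B.le_opNorm k
    have hle : ‖C t - z • t‖ ≤ ε * M := by
      rw [hdecomp]
      have e1 : ‖tmul (A h - x • h) k‖ ≤ ε := by rw [hnt, hk, mul_one]; exact hAh.le
      have e2 : ‖tmul h (B k - y • k)‖ ≤ ε := by rw [hnt, hh, one_mul]; exact hBk.le
      have e3 : ‖tmul (A h - x • h) (B k)‖ ≤ ε * ‖B‖ := by rw [hnt]; gcongr
      have e4 : ‖x • tmul h (B k - y • k)‖ ≤ ‖x‖ * ε := by rw [norm_smul]; gcongr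
      refine (norm_add_le_of_le (norm_add_le_of_le (norm_add_le_of_le e1 e2) e3) e4).trans ?_
      rw [hM]; linarith
    have hone : (1 : ℝ) ≤ ‖R‖ * (ε * M) := by
      calc (1 : ℝ) = ‖t‖ := by rw [ht, hnt, hh, hk, one_mul]
        _ = ‖R (z • t - C t)‖ := by rw [hRt]
        _ ≤ ‖R‖ * ‖z • t - C t‖ := R.le_opNorm _
        _ ≤ ‖R‖ * (ε * M) := by rw [norm_sub_rev]; gcongr
    have hlt : (‖R‖ * M + 1) * ε = 1 := mul_inv_cancel₀ (by positivity)
    nlinarith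
end

section
/- The spectrum of the adjacency operator of the graph sum of two bounded-degree graphs G and H equals {x + y : x ∈ σ(A_G), y ∈ σ(A_H)}, where A_G, A_H are their adjacency operators. -/
noncomputable section
namespace BoxSpec

abbrev E (V : Type*) := lp (fun _ : V => ℂ) 2

lemma hs {V : Type*} (f : E V) : HasSum (fun i => ‖f i‖ ^ 2) (‖f‖ ^ 2) := by
  have := lp.hasSum_norm (p := 2) (by simp) f
  simpa using this

lemma mem2 {V : Type*} {f : V → ℂ} (h : Summable (fun i => ‖f i‖ ^ 2)) :
    Memℓp f 2 := by
  apply memℓp_gen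
  simpa using h

def mk {V : Type*} (f : V → ℂ) (h : Summable (fun i => ‖f i‖ ^ 2)) : E V := ⟨f, mem2 h⟩

@[simp] lemma mk_apply {V : Type*} (f : V → ℂ) (h) (v : V) : mk f h v = f v := rfl

section lift
variable {V W X : Type*} (e : W × V ≃ X)

lemma summ (ζ : E X) : Summable (fun p : W × V => ‖ζ (e p)‖ ^ 2) :=
  e.summable_iff.2 (hs ζ).summable

/-- slice -/
def sl (ζ : E X) (w : W) : E V :=
  mk (fun v => ζ (e (w, v))) ((summable_prod_of_nonneg (fun _ => by positivity)).1 (summ e ζ) |>.1 w)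

@[simp] lemma sl_apply (ζ : E X) (w : W) (v : V) : sl e ζ w v = ζ (e (w, v)) := rfl

lemma hs_sl (ζ : E X) : HasSum (fun w => ‖sl e ζ w‖ ^ 2) (‖ζ‖ ^ 2) :=
  (e.hasSum_iff.2 (hs ζ)).prod_fiberwise (fun w => hs (sl e ζ w))

lemma sl_add (ζ ζ' : E X) (w : W) : sl e (ζ + ζ') w = sl e ζ w + sl e ζ' w := by
  ext v; simp

lemma sl_smul (c : ℂ) (ζ : E X) (w : W) : sl e (c • ζ) w = c • sl e ζ w := by
  ext v; simp

lemma lift_summ (M : E V →L[ℂ] E V) (ζ : E X) :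
    Summable (fun x => ‖M (sl e ζ (e.symm x).1) (e.symm x).2‖ ^ 2) := by
  rw [← e.summable_iff]
  refine (summable_prod_of_nonneg (fun _ => sq_nonneg _)).2 ⟨fun w => ?_, ?_⟩
  · simpa using (hs (M (sl e ζ w))).summable
  · simp only [Equiv.symm_apply_apply, (hs (M (sl e ζ _))).tsum_eq]
    refine Summable.of_nonneg_of_le (fun _ => by positivity) (fun w => ?_)
      ((hs_sl e ζ).summable.mul_left (‖M‖ ^ 2))
    rw [← mul_pow]
    gcongr
    exact M.le_opNorm _

def liftFun (M : E V →L[ℂ] E V) (ζ : E X) : E X :=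
  mk (fun x => M (sl e ζ (e.symm x).1) (e.symm x).2) (lift_summ e M ζ)

lemma sl_liftFun (M : E V →L[ℂ] E V) (ζ : E X) (w : W) :
    sl e (liftFun e M ζ) w = M (sl e ζ w) := by
  ext v; simp [liftFun]

lemma ext_sl {ζ ζ' : E X} (h : ∀ w, sl e ζ w = sl e ζ' w) : ζ = ζ' := by
  ext x
  have := congrArg (fun f : E V => f (e.symm x).2) (h (e.symm x).1)
  simpa using this

def lift (M : E V →L[ℂ] E V) : E X →L[ℂ] E X :=
  LinearMap.mkContinuous
    { toFun := liftFun e M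
      map_add' := fun ζ ζ' => ext_sl e fun w => by simp [sl_liftFun, sl_add]
      map_smul' := fun c ζ => ext_sl e fun w => by simp [sl_liftFun, sl_smul] } ‖M‖ (by
    intro ζ
    refine le_of_sq_le_sq ?_ (by positivity)
    rw [mul_pow]
    refine hasSum_le (fun w => ?_) (hs_sl e (liftFun e M ζ)) ((hs_sl e ζ).mul_left (‖M‖ ^ 2))
    rw [← mul_pow, sl_liftFun]
    gcongr
    exact M.le_opNorm _)

@[simp] lemma sl_lift (M : E V →L[ℂ] E V) (ζ : E X) (w : W) :
    sl e (lift e M ζ) w = M (sl e ζ w) := sl_liftFun e M ζ w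

lemma lift_apply (M : E V →L[ℂ] E V) (ζ : E X) (w : W) (v : V) :
    lift e M ζ (e (w, v)) = M (sl e ζ w) v := by
  rw [← sl_lift, sl_apply]

def liftHom : (E V →L[ℂ] E V) →ₐ[ℂ] (E X →L[ℂ] E X) where
  toFun := lift e
  map_one' := by ext1 ζ; exact ext_sl e fun w => by simp
  map_mul' M N := by ext1 ζ; exact ext_sl e fun w => by simp
  map_zero' := by
    ext1 ζ; refine ext_sl e fun w => ?_
    ext v; simp
  map_add' M N := by ext1 ζ; exact ext_sl e fun w => by simp [sl_add]
  commutes' c := by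
    ext1 ζ
    refine ext_sl e fun w => ?_
    simp [Algebra.algebraMap_eq_smul_one, sl_smul]

lemma spectrum_lift (M : E V →L[ℂ] E V) : spectrum ℂ (lift e M) ⊆ spectrum ℂ M :=
  AlgHom.spectrum_apply_subset (liftHom e) M
end lift

lemma selfAdj {V : Type*} (N : V → Finset V) (hN : ∀ u v, u ∈ N v → v ∈ N u)
    (A : E V →L[ℂ] E V) (hA : ∀ ξ v, A ξ v = ∑ u ∈ N v, ξ u) : IsSelfAdjoint A := by
  classical
  rw [ContinuousLinearMap.isSelfAdjoint_iff']
  ext ξ v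
  have h1 : A (lp.single 2 v 1) = ∑ u ∈ N v, lp.single 2 u (1 : ℂ) := by
    ext w
    rw [hA, lp.coeFn_sum, Finset.sum_apply]
    simp only [lp.single_apply, Pi.single_apply, Finset.sum_ite_eq', Finset.sum_ite_eq]
    simp only [show v ∈ N w ↔ w ∈ N v from ⟨hN _ _, hN _ _⟩]
  have h2 := lp.inner_single_left (𝕜 := ℂ) v (1 : ℂ) (ContinuousLinearMap.adjoint A ξ)
  rw [ContinuousLinearMap.adjoint_inner_right, h1, sum_inner] at h2
  simp only [lp.inner_single_left] at h2
  simp at h2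
  rw [← h2, hA]

/-- joint spectrum of commuting self-adjoint elements. -/
lemma spec_add {R : Type*} [CStarAlgebra R] {S T : R} (hS : IsSelfAdjoint S) (hT : IsSelfAdjoint T)
    (h : S * T = T * S) {z : ℂ} (hz : z ∈ spectrum ℂ (S + T)) :
    ∃ x ∈ spectrum ℂ S, ∃ y ∈ spectrum ℂ T, z = x + y := by
  set N : R := S + Complex.I • T with hNdef
  have hNs : star N = S - Complex.I • T := by
    simp [hNdef, hS.star_eq, hT.star_eq, sub_eq_add_neg]
  have hN : IsStarNormal N := by
    rw [isStarNormal_iff, hNs, Commute, SemiconjBy, hNdef]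
    simp only [mul_add, add_mul, sub_mul, mul_sub, smul_mul_assoc, mul_smul_comm, h, smul_add, smul_sub]
    abel
  have hre : cfc (fun w : ℂ => ((w.re : ℝ) : ℂ)) N = S := by
    have : (fun w : ℂ => ((w.re : ℝ) : ℂ)) = fun w => (1 / 2 : ℂ) * (w + star w) := by
      ext w; simp [Complex.add_conj]
    rw [this, cfc_const_mul .., cfc_add .., cfc_star .., cfc_id' .., hNs, hNdef]
    rw [add_add_sub_cancel, ← two_smul ℂ, smul_smul]; norm_num
  have him : cfc (fun w : ℂ => ((w.im : ℝ) : ℂ)) N = T := by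
    have : (fun w : ℂ => ((w.im : ℝ) : ℂ)) = fun w => (-Complex.I / 2 : ℂ) * (w - star w) := by
      ext w; simp [Complex.sub_conj]; ring_nf; simp
    rw [this, cfc_const_mul .., cfc_sub .., cfc_star .., cfc_id' .., hNs, hNdef]
    rw [add_sub_sub_cancel, ← two_smul ℂ, smul_smul, smul_smul]; ring_nf; simp
  have hadd : cfc (fun w : ℂ => ((w.re : ℝ) : ℂ) + ((w.im : ℝ) : ℂ)) N = S + T := by
    rw [cfc_add .., hre, him]
  rw [← hadd, cfc_map_spectrum ..] at hz
  obtain ⟨w, hw, rfl⟩ := hz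
  refine ⟨_, ?_, _, ?_, rfl⟩
  · rw [← hre, cfc_map_spectrum ..]; exact ⟨w, hw, rfl⟩
  · rw [← him, cfc_map_spectrum ..]; exact ⟨w, hw, rfl⟩

lemma approx {K : Type*} [NormedAddCommGroup K] [InnerProductSpace ℂ K] [CompleteSpace K]
    {A : K →L[ℂ] K} (hA : IsSelfAdjoint A) {x : ℂ} (hx : x ∈ spectrum ℂ A) {ε : ℝ} (hε : 0 < ε) :
    ∃ ξ : K, ‖ξ‖ = 1 ∧ ‖A ξ - x • ξ‖ ≤ ε := by
  by_contra! hcon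
  set D : K →L[ℂ] K := algebraMap ℂ _ x - A with hD
  have hDa : ∀ ξ, D ξ = -(A ξ - x • ξ) := fun ξ => by
    simp [hD, Algebra.algebraMap_eq_smul_one]
  have hb : ∀ ξ, ‖ξ‖ ≤ (⟨ε⁻¹, by positivity⟩ : NNReal) * ‖D ξ‖ := by
    intro ξ
    rcases eq_or_ne ξ 0 with rfl | h0
    · simp
    have hn : 0 < ‖ξ‖ := norm_pos_iff.2 h0
    have h1 := hcon (((‖ξ‖⁻¹ : ℝ) : ℂ) • ξ) (by simp [norm_smul, hn.ne'])
    have h2 : A (((‖ξ‖⁻¹ : ℝ) : ℂ) • ξ) - x • (((‖ξ‖⁻¹ : ℝ) : ℂ) • ξ)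
        = ((‖ξ‖⁻¹ : ℝ) : ℂ) • (A ξ - x • ξ) := by
      rw [map_smul, smul_sub, smul_comm]
    rw [h2, norm_smul, ← norm_neg (A ξ - x • ξ), ← hDa] at h1
    simp only [Complex.norm_real, norm_inv, norm_norm] at h1
    rw [inv_mul_eq_div, lt_div_iff₀ hn] at h1
    show ‖ξ‖ ≤ ε⁻¹ * ‖D ξ‖
    rw [inv_mul_eq_div, le_div_iff₀ hε]
    linarith
  have hanti := ContinuousLinearMap.antilipschitz_of_bound D hb
  have hDs : ContinuousLinearMap.adjoint D = D := by
    have hxr : star x = x := by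
      rw [hA.mem_spectrum_eq_re hx]; simp
    rw [← ContinuousLinearMap.star_eq_adjoint, hD, star_sub, hA.star_eq,
      ← algebraMap_star_comm, hxr]
  apply hx
  rw [spectrum.mem_resolventSet_iff, ← hD, ContinuousLinearMap.isUnit_iff_bijective,
    ContinuousLinearMap.bijective_iff_dense_range_and_antilipschitz]
  refine ⟨?_, _, hanti⟩
  rw [Submodule.topologicalClosure_eq_top_iff, ContinuousLinearMap.orthogonal_range, hDs]
  exact LinearMap.ker_eq_bot.2 hanti.injective

def tens {V W : Type*} (ξ : E V) (η : E W) : E (V × W) :=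
  mk (fun p => ξ p.1 * η p.2) (by
    simp only [norm_mul, mul_pow]
    exact (hs ξ).summable.mul_of_nonneg (hs η).summable (fun _ => by positivity)
      (fun _ => by positivity))

@[simp] lemma tens_apply {V W : Type*} (ξ : E V) (η : E W) (p) : tens ξ η p = ξ p.1 * η p.2 := rfl

lemma norm_tens {V W : Type*} (ξ : E V) (η : E W) : ‖tens ξ η‖ = ‖ξ‖ * ‖η‖ := by
  have h := hs (tens ξ η)
  have h2 := (hs ξ).mul (hs η) ((hs ξ).summable.mul_of_nonneg (hs η).summable
    (fun _ => by positivity) (fun _ => by positivity))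
  simp only [tens_apply, norm_mul, mul_pow] at h
  have := h.unique h2
  rw [← mul_pow] at this
  exact (sq_eq_sq₀ (by positivity) (by positivity)).1 this

end BoxSpec
end

open BoxSpec in
theorem spectrum_adjacency_boxProd
    {V W : Type*} [Nonempty V] [Nonempty W]
    (G : SimpleGraph V) (H : SimpleGraph W)
    (hGfin : ∀ v, (G.neighborSet v).Finite) (hGbdd : ∃ k, ∀ v, (G.neighborSet v).ncard ≤ k)
    (hHfin : ∀ w, (H.neighborSet w).Finite) (hHbdd : ∃ k, ∀ w, (H.neighborSet w).ncard ≤ k)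
    (A : lp (fun _ : V => ℂ) 2 →L[ℂ] lp (fun _ : V => ℂ) 2)
    (hA : ∀ (ξ : lp (fun _ : V => ℂ) 2) (v : V),
      A ξ v = ∑' u : G.neighborSet v, ξ (u : V))
    (B : lp (fun _ : W => ℂ) 2 →L[ℂ] lp (fun _ : W => ℂ) 2)
    (hB : ∀ (η : lp (fun _ : W => ℂ) 2) (w : W),
      B η w = ∑' u : H.neighborSet w, η (u : W))
    (C : lp (fun _ : V × W => ℂ) 2 →L[ℂ] lp (fun _ : V × W => ℂ) 2)
    (hC : ∀ (ζ : lp (fun _ : V × W => ℂ) 2) (p : V × W),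
      C ζ p = ∑' q : (G.boxProd H).neighborSet p, ζ (q : V × W)) :
    spectrum ℂ C = {z : ℂ | ∃ x ∈ spectrum ℂ A, ∃ y ∈ spectrum ℂ B, z = x + y} := by
  classical
  set NG : V → Finset V := fun v => (hGfin v).toFinset with hNG
  set NH : W → Finset W := fun w => (hHfin w).toFinset with hNH
  have hA' : ∀ (ξ : E V) v, A ξ v = ∑ u ∈ NG v, ξ u := fun ξ v => by
    rw [hA, ← Finset.tsum_subtype]
    exact tsum_congr_set_coe (fun u => ξ u) (by ext; simp [hNG])
  have hB' : ∀ (ξ : E W) v, B ξ v = ∑ u ∈ NH v, ξ u := fun ξ v => by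
    rw [hB, ← Finset.tsum_subtype]
    exact tsum_congr_set_coe (fun u => ξ u) (by ext; simp [hNH])
  have hC' : ∀ (ζ : E (V × W)) p, C ζ p =
      ∑ u ∈ NG p.1, ζ (u, p.2) + ∑ u ∈ NH p.2, ζ (p.1, u) := fun ζ p => by
    have hd : Disjoint (NG p.1 ×ˢ {p.2}) ({p.1} ×ˢ NH p.2) := by
      rw [Finset.disjoint_left]
      rintro ⟨a, b⟩ h1 h2
      simp [hNG, hNH] at h1 h2
      exact H.ne_of_adj h2.1 h1.2
    have : C ζ p = ∑ q ∈ (NG p.1 ×ˢ {p.2}) ∪ ({p.1} ×ˢ NH p.2), ζ q := by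
      rw [hC, ← Finset.tsum_subtype]
      refine tsum_congr_set_coe (fun u => ζ u) ?_
      ext ⟨a, b⟩
      simp [hNG, hNH, SimpleGraph.boxProd_adj]
    rw [this, Finset.sum_union hd, Finset.sum_product, Finset.sum_product]
    simp
  have sG : ∀ u v, u ∈ NG v → v ∈ NG u := fun u v h => by
    simp [hNG] at h ⊢; exact h.symm
  have sH : ∀ u v, u ∈ NH v → v ∈ NH u := fun u v h => by
    simp [hNH] at h ⊢; exact h.symm
  set S := lift (Equiv.prodComm W V) A with hSdef
  set T := lift (Equiv.refl (V × W)) B with hTdef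
  have hS : ∀ (ζ : E (V × W)) v w, S ζ (v, w) = ∑ u ∈ NG v, ζ (u, w) := fun ζ v w => by
    have := lift_apply (Equiv.prodComm W V) A ζ w v
    rw [hA'] at this
    exact this
  have hT : ∀ (ζ : E (V × W)) v w, T ζ (v, w) = ∑ u ∈ NH w, ζ (v, u) := fun ζ v w => by
    have := lift_apply (Equiv.refl (V × W)) B ζ v w
    rw [hB'] at this
    exact this
  have aA : IsSelfAdjoint A := selfAdj NG sG A hA'
  have aB : IsSelfAdjoint B := selfAdj NH sH B hB'
  have aS : IsSelfAdjoint S := selfAdj (fun p => NG p.1 ×ˢ {p.2})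
    (by simp only [Finset.mem_product, Finset.mem_singleton]
        exact fun u v h => ⟨sG _ _ h.1, h.2.symm⟩) S
    (fun ζ p => by rw [hS, Finset.sum_product]; simp)
  have aT : IsSelfAdjoint T := selfAdj (fun p => {p.1} ×ˢ NH p.2)
    (by simp only [Finset.mem_product, Finset.mem_singleton]
        exact fun u v h => ⟨h.1.symm, sH _ _ h.2⟩) T
    (fun ζ p => by rw [hT, Finset.sum_product]; simp)
  have hCST : C = S + T := by
    ext ζ ⟨v, w⟩
    rw [hC', _root_.add_apply, lp.coeFn_add, Pi.add_apply, hS, hT]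
  have hcomm : S * T = T * S := by
    ext ζ ⟨v, w⟩
    simp only [mul_apply_eq_comp, hS, hT]
    exact Finset.sum_comm
  ext z
  constructor
  · intro hz
    rw [hCST] at hz
    obtain ⟨x, hx, y, hy, h⟩ := spec_add aS aT hcomm hz
    exact ⟨x, spectrum_lift _ _ hx, y, spectrum_lift _ _ hy, h⟩
  · rintro ⟨x, hx, y, hy, rfl⟩ hu
    rw [spectrum.mem_resolventSet_iff, ContinuousLinearMap.isUnit_iff_bijective,
      ContinuousLinearMap.bijective_iff_dense_range_and_antilipschitz] at hu
    obtain ⟨-, c, hc⟩ := hu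
    have hε : (0 : ℝ) < 1 / (4 * (c + 1)) := by positivity
    obtain ⟨ξ, hξ, hξ'⟩ := approx aA hx hε
    obtain ⟨η, hη, hη'⟩ := approx aB hy hε
    have hb := ContinuousLinearMap.bound_of_antilipschitz _ hc (tens ξ η)
    have key : (algebraMap ℂ (E (V × W) →L[ℂ] E (V × W)) (x + y) - C) (tens ξ η) =
        -(tens (A ξ - x • ξ) η + tens ξ (B η - y • η)) := by
      ext ⟨v, w⟩
      have hk : C (tens ξ η) (v, w) = A ξ v * η w + ξ v * B η w := by
        rw [hC', hA', hB', Finset.sum_mul, Finset.mul_sum]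
        rfl
      change (x + y) * (ξ v * η w) - C (tens ξ η) (v, w) =
        -((A ξ v - x * ξ v) * η w + ξ v * (B η w - y * η w))
      rw [hk]
      ring
    rw [key, norm_neg, norm_tens, hξ, hη] at hb
    have h3 := norm_add_le (tens (A ξ - x • ξ) η) (tens ξ (B η - y • η))
    rw [norm_tens, norm_tens, hξ, hη] at h3
    have h4 : ‖tens (A ξ - x • ξ) η + tens ξ (B η - y • η)‖ ≤ 2 * (1 / (4 * ((c : ℝ) + 1))) := by
      linarith
    have h5 : (c : ℝ) * (2 * (1 / (4 * ((c : ℝ) + 1)))) < 1 := by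
      have : (0 : ℝ) ≤ c := c.2
      field_simp
      linarith
    have h6 := mul_le_mul_of_nonneg_left h4 c.2
    have h7 : (1 : ℝ) * 1 ≤ c * (2 * (1 / (4 * ((c : ℝ) + 1)))) := hb.trans h6
    linarith
end

section
/- Let n ≥ 5 and N ≥ 1. The spectrum of the adjacency operator of the graph L + NK_n (the graph sum of the bi-infinite line L with N copies of K_n) is the disjoint union of the N+1 intervals [−(N−j) + j(n−1) − 2, −(N−j) + j(n−1) + 2] for j = 0, 1, …, N, and these intervals are pairwise disjoint. -/
open Finset in
theorem unit_quad {R : Type*} [NormedRing R] [NormedAlgebra ℂ R] [CompleteSpace R]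
    (S S' : R) (h1 : S * S' = 1) (hS : ‖S‖ ≤ 1) (hS' : ‖S'‖ ≤ 1) (μ : ℂ)
    (hμ : ∀ t : ℝ, -2 ≤ t → t ≤ 2 → μ ≠ (t : ℂ)) :
    IsUnit (algebraMap ℂ R μ - S - S') := by
  obtain ⟨d, hd⟩ := IsAlgClosed.exists_pow_nat_eq (μ ^ 2 - 4) (n := 2) (by norm_num)
  have key : ∀ z w : ℂ, z * w = 1 → z + w = μ → ‖w‖ < 1 → IsUnit (algebraMap ℂ R μ - S - S') := by
    intro z w hzw hadd hw
    have hz0 : z ≠ 0 := by rintro rfl; simp at hzw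
    have hu : ∀ V : R, ‖V‖ ≤ 1 → IsUnit (1 - w • V) := by
      intro V hV
      apply isUnit_one_sub_of_norm_lt_one
      calc ‖w • V‖ ≤ ‖w‖ * ‖V‖ := norm_smul_le _ _
        _ ≤ ‖w‖ * 1 := by gcongr
        _ < 1 := by simpa using hw
    have h := ((IsUnit.mk0 z hz0).map (algebraMap ℂ R)).mul ((hu S hS).mul (hu S' hS'))
    convert h using 1
    rw [← hadd, ← Algebra.smul_def, sub_mul, mul_sub, mul_sub]
    simp only [one_mul, mul_one, smul_mul_assoc, mul_smul_comm, h1, smul_sub, smul_smul, map_add,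
      hzw, one_smul, Algebra.algebraMap_eq_smul_one]
    have : z * (w * w) = w := by rw [← mul_assoc, hzw, one_mul]
    rw [this]
    abel
  have hp : ((μ + d) / 2) * ((μ - d) / 2) = 1 := by linear_combination -hd / 4
  have hs : ((μ + d) / 2) + ((μ - d) / 2) = μ := by ring
  generalize (μ + d) / 2 = z at hp hs
  generalize (μ - d) / 2 = w at hp hs
  rcases lt_trichotomy ‖w‖ 1 with h | h | h
  · exact key z w hp hs h
  · exfalso
    have hz : z = (starRingEnd ℂ) w := by
      have h2 : w * (starRingEnd ℂ) w = 1 := by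
        rw [Complex.mul_conj, Complex.normSq_eq_norm_sq, h]; simp
      calc z = z * (w * (starRingEnd ℂ) w) := by rw [h2, mul_one]
        _ = _ := by rw [← mul_assoc, hp, one_mul]
    have hre := abs_le.1 (h ▸ Complex.abs_re_le_norm w)
    refine hμ (2 * w.re) (by linarith) (by linarith) ?_
    rw [← hs, hz, add_comm, Complex.add_conj]
  · refine key w z (by rw [mul_comm, hp]) (by rw [add_comm, hs]) ?_
    have : ‖z‖ * ‖w‖ = 1 := by rw [← norm_mul, hp, norm_one]
    nlinarith [norm_nonneg z]

theorem unit_sum {R ι : Type*} [Ring R] [DecidableEq ι] (P : ι → R) (c : R)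
    (hc : ∀ x : R, Commute c x)
    (hP : ∀ i j, Commute (P i) (P j)) (hPP : ∀ i, P i * P i = c * P i) (s : Finset ι) :
    ∀ M : R, (∀ i, Commute M (P i)) → (∀ j : ℕ, j ≤ s.card → IsUnit (M - j * c)) →
      IsUnit (M - ∑ i ∈ s, P i) := by
  induction s using Finset.induction_on with
  | empty => intro M _ h; simpa using h 0 (by simp)
  | insert a s ha ih =>
    intro M hM h
    rw [Finset.sum_insert ha, ← sub_sub]
    refine ih (M - P a) (fun i => (hM i).sub_left (hP a i)) ?_
    intro j hj
    rw [Finset.card_insert_of_notMem ha] at h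
    have u1 := h j (by omega)
    have u2 := h (j + 1) (by omega)
    set Q := M - j * c with hQ
    have e1 : M - P a - j * c = Q - P a := by rw [hQ]; abel
    have e2 : M - ((j + 1 : ℕ) : R) * c = Q - c := by rw [hQ]; push_cast; noncomm_ring
    rw [e2] at u2
    rw [e1]
    have hcQ : Commute Q (P a) :=
      (hM a).sub_left ((Nat.cast_commute j (P a)).mul_left (hc _))
    have hm : (Q - P a) * (Q - c + P a) = Q * (Q - c) := by
      have e3 : Q * P a = P a * Q := hcQ
      have e4 : P a * c = c * P a := (hc _).symm
      simp only [sub_mul, mul_add, mul_sub, e3, e4, hPP]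
      abel
    have hcomm : Commute (Q - P a) (Q - c + P a) := by
      have h0 : Commute (Q - P a) (Q - P a) := Commute.refl _
      have h1 : Commute (Q - P a) (P a) := hcQ.sub_left (Commute.refl _)
      have h2 : Commute (Q - P a) Q := (Commute.refl Q).sub_left hcQ.symm
      exact (h2.sub_right (hc _).symm).add_right h1
    have := u1.mul u2
    rw [← hm, hcomm.isUnit_mul_iff] at this
    exact this.1

theorem memlp_shift {G : Type*} [AddCommGroup G] (g : G) (ξ : lp (fun _ : G => ℂ) 2) :
    Memℓp (fun x => ξ (x + g)) 2 := by
  have h := (memℓp_gen_iff (p := 2) (by norm_num)).1 (lp.memℓp ξ)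
  refine (memℓp_gen_iff (p := 2) (by norm_num)).2 ?_
  have h' := (Equiv.addRight g).summable_iff.2 h
  simpa only [Function.comp_def, Equiv.coe_addRight] using h'

noncomputable def shiftOp {G : Type*} [AddCommGroup G] (g : G) :
    lp (fun _ : G => ℂ) 2 →L[ℂ] lp (fun _ : G => ℂ) 2 :=
  LinearMap.mkContinuous
    { toFun := fun ξ => ⟨fun x => ξ (x + g), memlp_shift g ξ⟩
      map_add' := fun _ _ => by ext; rfl
      map_smul' := fun _ _ => by ext; rfl } 1 (by
    intro ξ
    rw [one_mul]
    apply lp.norm_le_of_tsum_le (by norm_num) (norm_nonneg _)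
    rw [lp.norm_rpow_eq_tsum (by norm_num)]
    exact ((Equiv.addRight g).tsum_eq (fun x => ‖ξ x‖ ^ (2 : ENNReal).toReal)).le)

theorem shiftOp_apply {G : Type*} [AddCommGroup G] (g : G) (ξ : lp (fun _ : G => ℂ) 2) (x : G) :
    shiftOp g ξ x = ξ (x + g) := rfl

theorem shiftOp_norm {G : Type*} [AddCommGroup G] (g : G) : ‖shiftOp g‖ ≤ 1 :=
  LinearMap.mkContinuous_norm_le _ zero_le_one _

theorem shiftOp_mul {G : Type*} [AddCommGroup G] (g h : G) :
    shiftOp g * shiftOp h = shiftOp (g + h) := by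
  ext ξ x
  simp [shiftOp_apply, add_assoc]

theorem shiftOp_zero {G : Type*} [AddCommGroup G] : shiftOp (0 : G) = 1 := by
  ext ξ x
  simp [shiftOp_apply]

theorem shiftOp_commute {G : Type*} [AddCommGroup G] (g h : G) :
    Commute (shiftOp g) (shiftOp h) := by
  rw [commute_iff_eq, shiftOp_mul, shiftOp_mul, add_comm]

/-- hamming-neighbour sum -/
theorem nbr_sum {N n : ℕ} (f : (Fin N → Fin n) → ℂ) (x : Fin N → Fin n) :
    ∑ y ∈ Finset.univ.filter (fun y : Fin N → Fin n =>
              (Finset.univ.filter fun i => x i ≠ y i).card = 1), f y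
      = ∑ i, ∑ a, f (Function.update x i a) - N * f x := by
  have h1 : ∀ i, ∑ a, f (Function.update x i a) =
      ∑ a ∈ Finset.univ.erase (x i), f (Function.update x i a) + f x := by
    intro i
    have := Finset.sum_erase_add Finset.univ (fun a => f (Function.update x i a))
      (Finset.mem_univ (x i))
    rw [← this, Function.update_eq_self]
  simp only [h1, Finset.sum_add_distrib, Finset.sum_const, Finset.card_univ, Fintype.card_fin,
    nsmul_eq_mul, add_sub_cancel_right]
  rw [Finset.sum_sigma']
  symm
  refine Finset.sum_bij (fun p _ => Function.update x p.1 p.2) ?_ ?_ ?_ ?_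
  · rintro ⟨i, a⟩ h
    simp only [Finset.mem_sigma, Finset.mem_univ, Finset.mem_erase, true_and, and_true] at h
    simp only [Finset.mem_filter, Finset.mem_univ, true_and]
    rw [Finset.card_eq_one]
    refine ⟨i, ?_⟩
    ext k
    by_cases hk : k = i
    · subst hk; simpa using h.symm
    · simp [hk]
  · rintro ⟨i, a⟩ h ⟨k, b⟩ h' he
    simp only [Finset.mem_sigma, Finset.mem_univ, Finset.mem_erase, true_and, and_true] at h h' he
    have hik : i = k := by
      by_contra hik
      have := congrFun he i
      simp [hik] at this
      exact h this
    subst hik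
    have := congrFun he i
    simp at this
    simp [this]
  · intro y hy
    simp only [Finset.mem_filter, Finset.mem_univ, true_and] at hy
    rw [Finset.card_eq_one] at hy
    obtain ⟨i, hi⟩ := hy
    have hi' : ∀ k, x k ≠ y k ↔ k = i := by
      intro k
      have := Finset.ext_iff.1 hi k
      simpa using this
    refine ⟨⟨i, y i⟩, ?_, ?_⟩
    · simpa using ((hi' i).2 rfl).symm
    · funext k
      by_cases hk : k = i
      · subst hk; simp
      · have := (not_congr (hi' k)).2 hk
        simp [hk, not_not.1 this]
  · intros; rfl

theorem nbr_eigen {N n : ℕ} (hn : 2 ≤ n) (j : ℕ) (hj : j ≤ N) :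
    ∃ v : (Fin N → Fin n) → ℂ, (∃ x, v x = 1) ∧ ∀ x,
      ∑ y ∈ Finset.univ.filter (fun y : Fin N → Fin n =>
              (Finset.univ.filter fun i => x i ≠ y i).card = 1), v y
      = (j * n - N) * v x := by
  let a0 : Fin n := ⟨0, by omega⟩
  let a1 : Fin n := ⟨1, by omega⟩
  have h01 : a0 ≠ a1 := by simp [a0, a1]
  let w : Fin N → Fin n → ℂ := fun i a =>
    if (i : ℕ) < j then 1 else (if a = a0 then 1 else 0) - (if a = a1 then 1 else 0)
  refine ⟨fun x => ∏ i, w i (x i), ⟨fun _ => a0, ?_⟩, ?_⟩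
  · apply Finset.prod_eq_one
    intro i _
    simp [w, h01]
  · intro x
    rw [nbr_sum, sub_mul]
    congr 1
    have h : ∀ i : Fin N, ∑ a, ∏ k, w k (Function.update x i a k) =
        (if (i : ℕ) < j then (n : ℂ) else 0) * ∏ k, w k (x k) := by
      intro i
      have h2 : ∀ a, ∏ k, w k (Function.update x i a k) =
          w i a * ∏ k ∈ Finset.univ.erase i, w k (x k) := by
        intro a
        rw [← Finset.mul_prod_erase _ _ (Finset.mem_univ i)]
        simp only [Function.update_self]
        congr 1
        apply Finset.prod_congr rfl
        intro k hk
        rw [Function.update_of_ne (Finset.ne_of_mem_erase hk)]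
      simp only [h2, ← Finset.sum_mul]
      rw [← Finset.mul_prod_erase _ (fun k => w k (x k)) (Finset.mem_univ i), ← mul_assoc]
      congr 1
      by_cases hij : (i : ℕ) < j
      · simp [w, hij]
      · simp [w, hij]
    rw [Finset.sum_congr rfl (fun i _ => h i), ← Finset.sum_mul]
    congr 1
    rw [← Finset.sum_filter, Finset.sum_const, nsmul_eq_mul]
    congr 2
    rw [Fin.card_filter_val_lt]
    omega

theorem half_zero (f : ℕ → ℝ) (t : ℝ) (h1 : -2 ≤ t) (h2 : t ≤ 2)
    (hf : ∀ m, f (m + 2) = t * f (m + 1) - f m)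
    (hl : Filter.Tendsto f Filter.atTop (nhds 0)) : ∀ m, f m = 0 := by
  have hl1 : Filter.Tendsto (fun m => f (m + 1)) Filter.atTop (nhds 0) :=
    (Filter.tendsto_add_atTop_iff_nat 1).2 hl
  have hc : ∀ m, f m ^ 2 + f (m + 1) ^ 2 - t * f m * f (m + 1)
      = f 0 ^ 2 + f 1 ^ 2 - t * f 0 * f 1 := by
    intro m
    induction m with
    | zero => simp
    | succ k ih => rw [← ih, show k + 1 + 1 = k + 2 from rfl, hf]; ring
  have hE : f 0 ^ 2 + f 1 ^ 2 - t * f 0 * f 1 = 0 := by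
    have := ((hl.pow 2).add (hl1.pow 2)).sub ((hl.const_mul t).mul hl1)
    simp only [hc] at this
    have := tendsto_nhds_unique this tendsto_const_nhds
    simpa using this.symm
  have habs : ∀ m, |f (m + 1)| = |f m| := by
    intro m
    have h := hc m
    rw [hE] at h
    have h3 : t * f m * f (m + 1) ≤ 2 * (|f m| * |f (m + 1)|) := by
      calc t * f m * f (m + 1) ≤ |t * f m * f (m + 1)| := le_abs_self _
        _ = |t| * (|f m| * |f (m + 1)|) := by rw [abs_mul, abs_mul, mul_assoc]
        _ ≤ _ := by gcongr; exact abs_le.2 ⟨h1, h2⟩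
    have h4 : (|f (m + 1)| - |f m|) ^ 2 ≤ 0 := by
      nlinarith [sq_abs (f m), sq_abs (f (m + 1))]
    have := pow_eq_zero_iff (two_ne_zero) |>.1 (le_antisymm h4 (sq_nonneg _))
    linarith
  intro m
  have hm : ∀ k, |f k| = |f 0| := fun k => by
    induction k with
    | zero => rfl
    | succ k ih => rw [habs, ih]
  have h0 := hl.abs
  simp only [hm, abs_zero] at h0
  have := tendsto_nhds_unique h0 tendsto_const_nhds
  rw [← abs_eq_zero, hm, ← this]

theorem no_green (f : ℤ → ℝ) (t : ℝ) (h1 : -2 ≤ t) (h2 : t ≤ 2)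
    (hf : ∀ m, t * f m - f (m - 1) - f (m + 1) = if m = 0 then 1 else 0)
    (hl : Filter.Tendsto f Filter.cofinite (nhds 0)) : False := by
  have hp := half_zero (fun m => f m) t h1 h2 (by
    intro m
    have := hf (m + 1)
    rw [if_neg (by omega)] at this
    push_cast
    rw [show (m : ℤ) + 1 - 1 = m by ring, show (m : ℤ) + 1 + 1 = m + 2 by ring] at this
    linarith) (by
    have := hl.comp (Nat.cast_injective (R := ℤ)).tendsto_cofinite
    rwa [Nat.cofinite_eq_atTop] at this)
  have hq := half_zero (fun m => f (-m)) t h1 h2 (by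
    intro m
    have := hf (-(m + 1))
    rw [if_neg (by omega)] at this
    push_cast
    rw [show -((m : ℤ) + 1) - 1 = -(m + 2) by ring, show -((m : ℤ) + 1) + 1 = -m by ring] at this
    linarith) (by
    have := hl.comp (neg_injective.comp (Nat.cast_injective (R := ℤ))).tendsto_cofinite
    rwa [Nat.cofinite_eq_atTop] at this)
  have h := hf 0
  have a := hp 0
  have b := hp 1
  have c := hq 1
  simp at h a b c
  rw [a, b, c] at h
  norm_num at h

/-- For `n ≥ 5` and `N ≥ 1`, the spectrum of the adjacency operator of the graph
sum `L + N·K_n` of the bi-infinite line with `N` copies of `K_n` is the union of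
the `N+1` pairwise disjoint intervals `[c_j − 2, c_j + 2]`,
where `c_j = −(N−j) + j(n−1)` for `j = 0, …, N`. -/
theorem spectrum_line_sum_hamming (N n : ℕ) (hN : 1 ≤ N) (hn : 5 ≤ n)
    (A : lp (fun _ : ℤ × (Fin N → Fin n) => ℂ) 2 →L[ℂ]
         lp (fun _ : ℤ × (Fin N → Fin n) => ℂ) 2)
    (hA : ∀ (ξ : lp (fun _ : ℤ × (Fin N → Fin n) => ℂ) 2) (m : ℤ)
        (x : Fin N → Fin n),
      A ξ (m, x) = ξ (m - 1, x) + ξ (m + 1, x) +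
        ∑ y ∈ Finset.univ.filter
            (fun y : Fin N → Fin n =>
              (Finset.univ.filter fun i => x i ≠ y i).card = 1),
          ξ (m, y)) :
    (spectrum ℂ A =
      ⋃ j ∈ Finset.range (N + 1), (fun x : ℝ => (x : ℂ)) ''
        Set.Icc (-((N : ℝ) - j) + j * ((n : ℝ) - 1) - 2)
                (-((N : ℝ) - j) + j * ((n : ℝ) - 1) + 2)) ∧
    ∀ i ∈ Finset.range (N + 1), ∀ j ∈ Finset.range (N + 1), i ≠ j →
      Disjoint
        (Set.Icc (-((N : ℝ) - i) + i * ((n : ℝ) - 1) - 2)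
                 (-((N : ℝ) - i) + i * ((n : ℝ) - 1) + 2))
        (Set.Icc (-((N : ℝ) - j) + j * ((n : ℝ) - 1) - 2)
                 (-((N : ℝ) - j) + j * ((n : ℝ) - 1) + 2)) := by
  have hnz : NeZero n := ⟨by omega⟩
  constructor
  · apply Set.Subset.antisymm
    · intro z hz
      by_contra hcon
      simp only [Set.mem_iUnion, not_exists, Finset.mem_range, Set.mem_image, Set.mem_Icc,
        not_and] at hcon
      apply hz
      let P : Fin N → (lp (fun _ : ℤ × (Fin N → Fin n) => ℂ) 2 →L[ℂ]
         lp (fun _ : ℤ × (Fin N → Fin n) => ℂ) 2) :=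
        fun i => ∑ a : Fin n, shiftOp ((0 : ℤ), (Pi.single i a : Fin N → Fin n))
      let S := shiftOp ((1 : ℤ), (0 : Fin N → Fin n))
      let S' := shiftOp ((-1 : ℤ), (0 : Fin N → Fin n))
      have hAeq : A = S + S' + ∑ i, P i - algebraMap ℂ _ (N : ℂ) := by
        ext ξ ⟨m, x⟩
        rw [hA, nbr_sum (fun y => ξ (m, y)) x]
        have e : ∀ i, (P i ξ) (m, x) = ∑ a, ξ (m, Function.update x i a) := by
          intro i
          have e1 : (P i ξ) (m, x) = ∑ a, ξ (m, x + Pi.single i a) := by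
            simp only [P, ContinuousLinearMap.sum_apply, lp.coeFn_sum, Finset.sum_apply,
              shiftOp_apply, Prod.mk_add_mk, add_zero]
          rw [e1]
          refine Fintype.sum_equiv (Equiv.addLeft (x i)) _ _ ?_
          intro a
          have : x + Pi.single i a = Function.update x i ((Equiv.addLeft (x i)) a) := by
            funext k
            by_cases hk : k = i
            · subst hk; simp
            · simp [hk]
          rw [this]
        have e' : ((S + S' + ∑ i, P i - algebraMap ℂ _ (N : ℂ)) ξ) (m, x) =
            S ξ (m, x) + S' ξ (m, x) + ∑ i, P i ξ (m, x) - N * ξ (m, x) := by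
          have e2 : ((∑ i, P i) ξ) (m, x) = ∑ i, P i ξ (m, x) := by
            simp only [ContinuousLinearMap.sum_apply, lp.coeFn_sum, Finset.sum_apply]
          rw [← e2]
          rfl
        rw [e']
        simp only [e, S, S', shiftOp_apply, Prod.mk_add_mk, add_zero]
        rw [← sub_eq_add_neg]
        ring
      have hu := unit_sum P (algebraMap ℂ _ (n : ℂ)) (fun x => Algebra.commutes _ x)
        (fun i k => Commute.sum_left _ _ _ fun a _ => Commute.sum_right _ _ _ fun b _ =>
          shiftOp_commute _ _)
        (by
          intro i
          simp only [P]
          rw [Finset.sum_mul]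
          have : ∀ a : Fin n, shiftOp ((0 : ℤ), (Pi.single i a : Fin N → Fin n)) * P i = P i := by
            intro a
            simp only [P, Finset.mul_sum, shiftOp_mul, Prod.mk_add_mk, add_zero,
              ← Pi.single_add]
            exact Equiv.sum_comp (Equiv.addLeft a)
              (fun b => shiftOp ((0 : ℤ), (Pi.single i b : Fin N → Fin n)))
          rw [Finset.sum_congr rfl (fun a _ => this a)]
          simp [P])
        Finset.univ (algebraMap ℂ _ (z + N) - S - S')
        (fun i => (Commute.sub_left (Algebra.commute_algebraMap_left _ _)
          (Commute.sum_right _ _ _ fun b _ => shiftOp_commute _ _)).sub_left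
          (Commute.sum_right _ _ _ fun b _ => shiftOp_commute _ _))
        (by
          intro j hj
          rw [Finset.card_univ, Fintype.card_fin] at hj
          have := unit_quad S S' (by
            simp only [S, S', shiftOp_mul, ← shiftOp_zero]
            rfl)
            (shiftOp_norm _) (shiftOp_norm _) (z + N - j * n) (by
              intro t ht1 ht2 ht
              refine hcon j (by omega) (t - N + j * n) ⟨by linarith, by linarith⟩ ?_
              push_cast
              rw [← ht]; ring)
          convert this using 1
          simp only [map_sub, map_mul, map_natCast]
          abel)
      have hfin : algebraMap ℂ _ z - A = algebraMap ℂ _ (z + N) - S - S' - ∑ i, P i := by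
        rw [hAeq, map_add]
        abel
      rw [← hfin] at hu
      exact hu
    · intro z hz
      simp only [Set.mem_iUnion, Finset.mem_range, Set.mem_image, Set.mem_Icc] at hz
      obtain ⟨j, hj, r, ⟨hr1, hr2⟩, rfl⟩ := hz
      intro hu
      obtain ⟨v, ⟨x0, hx0⟩, hv⟩ := nbr_eigen (N := N) (n := n) (by omega) j (by omega)
      obtain ⟨u, hu⟩ := hu
      let δ : lp (fun _ : ℤ × (Fin N → Fin n) => ℂ) 2 := lp.single 2 ((0 : ℤ), x0) (1 : ℂ)
      set ξ := (↑u⁻¹ : lp (fun _ : ℤ × (Fin N → Fin n) => ℂ) 2 →L[ℂ]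
         lp (fun _ : ℤ × (Fin N → Fin n) => ℂ) 2) δ with hξ
      have hδ : (r : ℂ) • ξ - A ξ = δ := by
        have : (u * u⁻¹ : (lp (fun _ : ℤ × (Fin N → Fin n) => ℂ) 2 →L[ℂ]
         lp (fun _ : ℤ × (Fin N → Fin n) => ℂ) 2)ˣ).val δ = δ := by simp
        rw [Units.val_mul, ContinuousLinearMap.mul_apply, ← hξ, hu] at this
        exact this
      let g : ℤ → ℂ := fun m => ∑ x, v x * ξ (m, x)
      have hg : ∀ m, ((r : ℂ) - (j * n - N)) * g m - g (m - 1) - g (m + 1)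
          = if m = 0 then 1 else 0 := by
        intro m
        have hx : ∀ x, v x * (r * ξ (m, x)) - v x * (A ξ (m, x)) = v x * δ (m, x) := by
          intro x
          rw [← hδ, ← mul_sub]
          rfl
        have hs := Finset.sum_congr (rfl : (Finset.univ : Finset (Fin N → Fin n)) = _)
          (fun x _ => hx x)
        have hd : ∑ x, v x * δ (m, x) = if m = 0 then 1 else 0 := by
          rw [Finset.sum_eq_single x0]
          · by_cases hm : m = 0
            · subst hm; simp [δ, hx0]
            · simp [δ, hx0, hm, lp.single_apply, Pi.single_apply]
          · intro b _ hb
            simp [δ, hb, lp.single_apply, Pi.single_apply]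
          · simp
        rw [hd, Finset.sum_sub_distrib] at hs
        rw [← hs]
        simp only [hA, mul_add, Finset.sum_add_distrib]
        have hB : ∑ x, v x * ∑ y ∈ Finset.univ.filter
            (fun y : Fin N → Fin n =>
              (Finset.univ.filter fun i => x i ≠ y i).card = 1), ξ (m, y)
            = (j * n - N) * g m := by
          simp only [g, Finset.mul_sum, Finset.sum_filter, mul_ite, mul_zero]
          rw [Finset.sum_comm]
          apply Finset.sum_congr rfl
          intro y _
          rw [← mul_assoc, ← hv y, Finset.sum_filter, Finset.sum_mul]
          apply Finset.sum_congr rfl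
          intro x _
          simp only [ne_comm, ite_mul, zero_mul]
        rw [hB]
        have : ∑ x, v x * (r * ξ (m, x)) = r * g m := by
          simp only [g, Finset.mul_sum]
          apply Finset.sum_congr rfl
          intros; ring
        rw [this]
        simp only [g]
        ring
      have hlim : Filter.Tendsto g Filter.cofinite (nhds 0) := by
        have h2 := lp.memℓp ξ
        rw [memℓp_gen_iff (by norm_num)] at h2
        have h3 := h2.tendsto_cofinite_zero
        have h4 : Filter.Tendsto (fun p => ξ p) Filter.cofinite (nhds 0) := by
          rw [tendsto_zero_iff_norm_tendsto_zero]
          have := h3.sqrt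
          simpa [Real.sqrt_sq] using this
        rw [show (0 : ℂ) = ∑ x : Fin N → Fin n, v x * 0 by simp]
        refine tendsto_finsetSum _ fun x _ => Filter.Tendsto.const_mul _ ?_
        exact h4.comp (Function.Injective.tendsto_cofinite (Prod.mk_left_injective x))
      refine no_green (fun m => (g m).re) (r - (j * n - N)) (by linarith) (by linarith) ?_ ?_
      · intro m
        have := congrArg Complex.re (hg m)
        have e : ((r : ℂ) - (j * n - N)) = ((r - (j * n - N) : ℝ) : ℂ) := by push_cast; rfl
        rw [e, Complex.sub_re, Complex.sub_re, Complex.re_ofReal_mul] at this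
        rw [this]
        split_ifs <;> simp
      · have := (Complex.continuous_re.tendsto 0).comp hlim
        exact this
  · have key : ∀ i j : ℕ, i < j → Disjoint
        (Set.Icc (-((N : ℝ) - i) + i * ((n : ℝ) - 1) - 2)
                 (-((N : ℝ) - i) + i * ((n : ℝ) - 1) + 2))
        (Set.Icc (-((N : ℝ) - j) + j * ((n : ℝ) - 1) - 2)
                 (-((N : ℝ) - j) + j * ((n : ℝ) - 1) + 2)) := by
      intro i j hij
      rw [Set.disjoint_left]
      intro x hx hy
      have h1 : (i : ℝ) + 1 ≤ j := by exact_mod_cast hij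
      have h2 : (5 : ℝ) ≤ n := by exact_mod_cast hn
      have := hx.2
      have := hy.1
      nlinarith
    intro i _ j _ hij
    rcases lt_or_gt_of_ne hij with h | h
    · exact key i j h
    · exact (key j i h).symm
end

section
/- Let n ≥ 5 and N ≥ 1. The spectrum of the adjacency operator of L + N·K_{n,n} is the disjoint union of 2N+1 intervals of length 4 centered at the points jn for j = −N, …, N. -/
namespace LineSum
open scoped ENNReal

/-- The ℓ² space. -/
noncomputable abbrev H (α : Type) := lp (fun _ : α => ℂ) 2

theorem two_pos : 0 < (2 : ℝ≥0∞).toReal := by norm_num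

/-- Composition with a permutation of the index set. -/
noncomputable def C {α : Type} (e : α ≃ α) : H α →L[ℂ] H α :=
  LinearMap.mkContinuous
    { toFun := fun ξ => ⟨fun a => ξ (e a), memℓp_gen (by
        have := (lp.memℓp ξ).summable two_pos
        exact (e.summable_iff (f := fun i => ‖ξ i‖ ^ (2 : ℝ≥0∞).toReal)).2 this)⟩
      map_add' := fun ξ η => by ext a; rfl
      map_smul' := fun c ξ => by ext a; rfl } 1 (by
    intro ξ
    rw [one_mul]
    refine lp.norm_le_of_tsum_le two_pos (norm_nonneg _) ?_
    rw [lp.norm_rpow_eq_tsum two_pos]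
    exact le_of_eq (e.tsum_eq (fun i => ‖ξ i‖ ^ (2 : ℝ≥0∞).toReal)))

theorem C_apply {α : Type} (e : α ≃ α) (ξ : H α) (a : α) : C e ξ a = ξ (e a) := rfl

theorem C_norm {α : Type} (e : α ≃ α) : ‖C e‖ ≤ 1 := LinearMap.mkContinuous_norm_le _ zero_le_one _

theorem C_mul {α : Type} (e f : α ≃ α) : C e * C f = C (e.trans f) := by
  ext ξ a; rfl

theorem C_refl {α : Type} : C (Equiv.refl α) = 1 := by
  ext ξ a; rfl

/-- `C e` as a unit. -/
noncomputable def CU {α : Type} (e : α ≃ α) : (H α →L[ℂ] H α)ˣ :=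
  ⟨C e, C e.symm, by rw [C_mul]; simp [C_refl], by rw [C_mul]; simp [C_refl]⟩

theorem norm_of_mem {α : Type} (e : α ≃ α) (z : ℂ) (hz : z ∈ spectrum ℂ (C e)) : ‖z‖ ≤ 1 := by
  have h := spectrum.norm_le_norm_mul_of_mem hz
  have h1 : ‖(1 : H α →L[ℂ] H α)‖ ≤ 1 := ContinuousLinearMap.norm_id_le
  have h2 := C_norm e
  nlinarith [norm_nonneg (C e), norm_nonneg (1 : H α →L[ℂ] H α)]

theorem norm_eq_of_mem {α : Type} (e : α ≃ α) (z : ℂ) (hz : z ∈ spectrum ℂ (C e)) : ‖z‖ = 1 := by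
  refine le_antisymm (norm_of_mem e z hz) ?_
  have h : z⁻¹ ∈ spectrum ℂ (C e.symm) := by
    have := (spectrum.inv₀_mem_inv_iff (R := ℂ) (a := CU e) (r := z)).2 hz
    exact this
  have h3 := norm_of_mem _ _ h
  have h0 : z ≠ 0 := spectrum.ne_zero_of_mem_of_unit (a := CU e) hz
  rw [norm_inv] at h3
  have := norm_pos_iff.2 h0
  exact (inv_le_one₀ this).1 h3

theorem exists_z (l : ℂ) : ∃ z : ℂ, z ≠ 0 ∧ z + z⁻¹ = l := by
  obtain ⟨s, hs⟩ := IsAlgClosed.exists_pow_nat_eq (l ^ 2 - 4) (n := 2) (by norm_num)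
  have h0 : (l + s) / 2 ≠ 0 := by
    intro h
    have : s = -l := by linear_combination 2 * h
    rw [this] at hs
    have : (4 : ℂ) = 0 := by linear_combination hs
    norm_num at this
  refine ⟨(l + s) / 2, h0, ?_⟩
  have h1 : l + s ≠ 0 := fun h => h0 (by rw [h, zero_div])
  field_simp
  linear_combination hs

/-- The set `[-2,2]` in ℂ, described. -/
theorem real_of_norm_one (z : ℂ) (hz : ‖z‖ = 1) :
    ∃ t : ℝ, t ∈ Set.Icc (-2 : ℝ) 2 ∧ z + z⁻¹ = t := by
  refine ⟨2 * z.re, ?_, ?_⟩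
  · have := Complex.abs_re_le_norm z
    rw [hz, abs_le] at this
    constructor <;> linarith [this.1, this.2]
  · rw [Complex.inv_eq_conj hz, Complex.add_conj]

theorem exists_z_real (t : ℝ) (ht : t ∈ Set.Icc (-2 : ℝ) 2) :
    ∃ z : ℂ, ‖z‖ = 1 ∧ z + z⁻¹ = t := by
  have hs : 0 ≤ 1 - (t / 2) ^ 2 := by nlinarith [ht.1, ht.2]
  have hz : ‖(⟨t / 2, √(1 - (t / 2) ^ 2)⟩ : ℂ)‖ = 1 := by
    rw [Complex.norm_def, Complex.normSq_mk, Real.mul_self_sqrt hs]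
    rw [show t / 2 * (t / 2) + (1 - (t / 2) ^ 2) = 1 by ring, Real.sqrt_one]
  refine ⟨_, hz, ?_⟩
  rw [Complex.inv_eq_conj hz, Complex.add_conj]
  push_cast
  ring

theorem spec_T {α : Type} (e : α ≃ α) (l : ℂ) (hl : l ∈ spectrum ℂ (C e + C e.symm)) :
    ∃ t : ℝ, t ∈ Set.Icc (-2 : ℝ) 2 ∧ l = t := by
  obtain ⟨z, hz0, hz⟩ := exists_z l
  by_cases h : ‖z‖ = 1
  · obtain ⟨t, ht, h'⟩ := real_of_norm_one z h
    exact ⟨t, ht, by rw [← hz, h']⟩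
  exfalso
  have h1 : IsUnit (algebraMap ℂ (H α →L[ℂ] H α) z - C e) := by
    rw [← spectrum.notMem_iff]; exact fun h' => h (norm_eq_of_mem _ _ h')
  have h2 : IsUnit (algebraMap ℂ (H α →L[ℂ] H α) z - C e.symm) := by
    rw [← spectrum.notMem_iff]; exact fun h' => h (norm_eq_of_mem _ _ h')
  apply hl
  change IsUnit _
  have h3 : IsUnit (algebraMap ℂ (H α →L[ℂ] H α) z⁻¹) := 
    (IsUnit.mk0 _ (inv_ne_zero hz0)).map _
  convert h3.mul (h1.mul h2) using 1
  have hS : C e * C e.symm = 1 := (CU e).mul_inv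
  have h4 : (algebraMap ℂ (H α →L[ℂ] H α) z - C e) * (algebraMap ℂ (H α →L[ℂ] H α) z - C e.symm)
     = (z ^ 2 + 1) • 1 - z • (C e + C e.symm) := by
    rw [mul_sub, sub_mul, sub_mul, hS]
    simp only [Algebra.algebraMap_eq_smul_one, smul_mul_assoc, mul_smul_comm, one_mul, mul_one]
    module
  rw [h4, ← hz]
  simp only [Algebra.algebraMap_eq_smul_one, smul_mul_assoc, one_mul, smul_sub, smul_smul]
  rw [inv_mul_cancel₀ hz0, one_smul]
  congr 2
  field_simp

theorem step {R : Type*} [Ring R] [Algebra ℂ R] (a b : R) (hab : Commute a b) (n l : ℂ)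
    (hb : b * b * b = (n ^ 2) • b) (h : l ∈ spectrum ℂ (a + b)) :
    l ∈ spectrum ℂ a ∨ l - n ∈ spectrum ℂ a ∨ l + n ∈ spectrum ℂ a := by
  by_contra! hc
  obtain ⟨h0, h1, h2⟩ := hc
  rw [spectrum.notMem_iff] at h0 h1 h2
  apply h
  change IsUnit _
  set u := algebraMap ℂ R l - a with hu
  have hub : Commute u b := (Algebra.commute_algebraMap_left l b).sub_left hab
  have e1 : algebraMap ℂ R (l - n) - a = u - n • 1 := by
    rw [map_sub, hu, Algebra.algebraMap_eq_smul_one n]; abel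
  have e2 : algebraMap ℂ R (l + n) - a = u + n • 1 := by
    rw [map_add, hu, Algebra.algebraMap_eq_smul_one n]; abel
  have e3 : algebraMap ℂ R l - (a + b) = u - b := by rw [hu]; abel
  rw [e1] at h1
  rw [e2] at h2
  rw [e3]
  have hcm : Commute (u - b) (u * u + u * b + b * b - (n ^ 2) • 1) := by
    have c1 : Commute (u - b) u := (Commute.refl u).sub_left hub.symm
    have c2 : Commute (u - b) b := hub.sub_left (Commute.refl b)
    exact (((c1.mul_right c1).add_right (c1.mul_right c2)).add_right (c2.mul_right c2)).sub_right
      ((Commute.one_right _).smul_right _)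
  refine (hcm.isUnit_mul_iff.1 ?_).1
  convert (h0.mul h1).mul h2 using 1
  have hbu : b * u = u * b := hub.eq.symm
  have hbuu : b * (u * u) = u * u * b := by rw [← mul_assoc, hbu, mul_assoc, hbu, mul_assoc]
  have hbub : b * (u * b) = u * b * b := by rw [← mul_assoc, hbu]
  have hb' : b * (b * b) = (n ^ 2) • b := by rw [← mul_assoc, hb]
  simp only [sub_mul, mul_sub, mul_add, add_mul, smul_mul_assoc, mul_smul_comm, mul_one, one_mul,
    hbuu, hbub, hb', smul_sub, smul_add, smul_smul]
  simp only [mul_assoc]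
  module

theorem steps {R : Type*} [Ring R] [Algebra ℂ R] {ι : Type*} [DecidableEq ι] (T : R) (B : ι → R)
    (n : ℂ)
    (hT : ∀ i, Commute T (B i)) (hB : ∀ i j, Commute (B i) (B j))
    (hb : ∀ i, B i * B i * B i = (n ^ 2) • B i) (s : Finset ι) :
    ∀ l, l ∈ spectrum ℂ (T + ∑ i ∈ s, B i) →
      ∃ j : ℤ, -(s.card : ℤ) ≤ j ∧ j ≤ s.card ∧ l - j * n ∈ spectrum ℂ T := by
  induction s using Finset.induction_on with
  | empty => intro l hl; exact ⟨0, by simp, by simp, by simpa using hl⟩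
  | insert i s his ih =>
    intro l hl
    rw [Finset.sum_insert his, add_comm (B i), ← add_assoc] at hl
    have hc : Commute (T + ∑ i ∈ s, B i) (B i) :=
      (hT i).add_left (Commute.sum_left _ _ _ fun j _ => hB j i)
    rw [Finset.card_insert_of_notMem his]
    push_cast
    rcases step _ _ hc n l (hb i) hl with h | h | h
    · obtain ⟨j, h1, h2, h3⟩ := ih _ h
      exact ⟨j, by omega, by omega, h3⟩
    · obtain ⟨j, h1, h2, h3⟩ := ih _ h
      refine ⟨j + 1, by omega, by omega, ?_⟩
      convert h3 using 1
      push_cast; ring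
    · obtain ⟨j, h1, h2, h3⟩ := ih _ h
      refine ⟨j - 1, by omega, by omega, ?_⟩
      convert h3 using 1
      push_cast; ring

theorem geom_zero (w : ℂ) (hw : ‖w‖ = 1) (h : ℕ → ℂ) (hr : ∀ k, h (k + 1) = w * h k)
    (ht : Filter.Tendsto h Filter.atTop (nhds 0)) : ∀ k, h k = 0 := by
  have hn : ∀ k, ‖h k‖ = ‖h 0‖ := by
    intro k
    induction k with
    | zero => rfl
    | succ k ih => rw [hr, norm_mul, hw, one_mul, ih]
  have h1 := ht.norm
  simp only [hn, norm_zero] at h1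
  have h2 := tendsto_nhds_unique h1 tendsto_const_nhds
  intro k
  rw [← norm_eq_zero, hn, ← h2]

theorem rec_zero (z : ℂ) (hz : ‖z‖ = 1) (g : ℕ → ℂ)
    (hr : ∀ k, g (k + 2) + g k = (z + z⁻¹) * g (k + 1))
    (ht : Filter.Tendsto g Filter.atTop (nhds 0)) : ∀ k, g k = 0 := by
  have hz0 : z ≠ 0 := by rintro rfl; simp at hz
  have ht1 : Filter.Tendsto (fun k => g (k + 1)) Filter.atTop (nhds 0) :=
    ht.comp (Filter.tendsto_add_atTop_nat 1)
  have h := geom_zero z⁻¹ (by rw [norm_inv, hz, inv_one]) (fun k => g (k + 1) - z * g k) (by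
    intro k
    have := hr k
    field_simp at this ⊢
    linear_combination this) (by simpa using ht1.sub (ht.const_mul z))
  exact geom_zero z hz g (fun k => sub_eq_zero.1 (h k)) ht


section graph
variable {N n : ℕ} [NeZero n]

/-- Switch sides in `K_{n,n}`, by the reflection `a ↦ c - a`. -/
def fl (c : Fin n) : Fin n ⊕ Fin n → Fin n ⊕ Fin n
  | .inl a => .inr (c - a)
  | .inr a => .inl (c - a)

theorem fl_fl (c : Fin n) (x : Fin n ⊕ Fin n) : fl c (fl c x) = x := by
  rcases x with a | a <;> simp [fl]

theorem fl3 (c d e : Fin n) (x : Fin n ⊕ Fin n) : fl c (fl d (fl e x)) = fl (c - d + e) x := by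
  rcases x with a | a <;> simp only [fl] <;> congr 1 <;> abel

/-- Switch sides at coordinate `i`. -/
def pf (i : Fin N) (c : Fin n) (x : Fin N → Fin n ⊕ Fin n) : Fin N → Fin n ⊕ Fin n :=
  Function.update x i (fl c (x i))

theorem pf_pf (i : Fin N) (c : Fin n) : Function.Involutive (pf (N := N) i c) := by
  intro x; simp [pf, fl_fl]

theorem pf3 (i : Fin N) (c d e : Fin n) (x : Fin N → Fin n ⊕ Fin n) :
    pf i c (pf i d (pf i e x)) = pf i (c - d + e) x := by
  simp [pf, fl3]

theorem pf_comm (i j : Fin N) (h : i ≠ j) (c d : Fin n) (x : Fin N → Fin n ⊕ Fin n) :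
    pf i c (pf j d x) = pf j d (pf i c x) := by
  simp only [pf, Function.update_of_ne h, Function.update_of_ne h.symm]
  exact Function.update_comm h.symm _ _ _

/-- Vertices. -/
abbrev V (N n : ℕ) : Type := ℤ × (Fin N → Fin n ⊕ Fin n)

/-- Permutation of the vertices. -/
def P (i : Fin N) (c : Fin n) : V N n ≃ V N n := (Equiv.refl ℤ).prodCongr (pf_pf i c).toPerm

theorem P_apply (i : Fin N) (c : Fin n) (m : ℤ) (x : Fin N → Fin n ⊕ Fin n) :
    P i c (m, x) = (m, pf i c x) := rfl

/-- Shift. -/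
def Sh (N n : ℕ) : V N n ≃ V N n := (Equiv.addRight (1 : ℤ)).prodCongr (Equiv.refl _)

theorem Sh_apply (m : ℤ) (x : Fin N → Fin n ⊕ Fin n) : Sh N n (m, x) = (m + 1, x) := rfl
theorem Sh_symm_apply (m : ℤ) (x : Fin N → Fin n ⊕ Fin n) : (Sh N n).symm (m, x) = (m - 1, x) := rfl

/-- The `i`-th copy of the adjacency operator of `K_{n,n}`. -/
noncomputable def B (i : Fin N) : H (V N n) →L[ℂ] H (V N n) := ∑ c : Fin n, C (P i c)

theorem B_apply (i : Fin N) (ξ : H (V N n)) (m : ℤ) (x : Fin N → Fin n ⊕ Fin n) :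
    B i ξ (m, x) = ∑ c, ξ (m, pf i c x) := by
  rw [B, sum_apply, lp.coeFn_sum, Finset.sum_apply]
  rfl

theorem C_comm_B (e : V N n ≃ V N n) (i : Fin N) (h : ∀ c v, e (P i c v) = P i c (e v)) :
    Commute (C e) (B i) := by
  refine Commute.sum_right _ _ _ fun c _ => ?_
  rw [Commute, SemiconjBy, C_mul, C_mul]
  congr 1
  ext1 v
  exact (h c v).symm

theorem B_comm (i j : Fin N) : Commute (B i : H (V N n) →L[ℂ] H (V N n)) (B j) := by
  by_cases hij : i = j
  · rw [hij]
  · refine Commute.sum_left _ _ _ fun c _ => C_comm_B _ _ ?_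
    rintro d ⟨m, x⟩
    simp only [P_apply, pf_comm i j hij]

theorem T_comm (i : Fin N) : Commute (C (Sh N n) + C (Sh N n).symm) (B i) := by
  refine (C_comm_B _ _ ?_).add_left (C_comm_B _ _ ?_) <;> rintro c ⟨m, x⟩ <;> rfl

theorem B_cube (i : Fin N) :
    (B i * B i * B i : H (V N n) →L[ℂ] H (V N n)) = ((n : ℂ) ^ 2) • B i := by
  have h : ∀ c d : Fin n, C (P i c) * C (P i d) * B (N := N) i = B i := by
    intro c d
    rw [B, Finset.mul_sum, ← Equiv.sum_comp (Equiv.addLeft (d - c))]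
    refine Finset.sum_congr rfl fun e _ => ?_
    rw [C_mul, C_mul]
    congr 1
    ext1 v
    obtain ⟨m, x⟩ := v
    simp only [Equiv.trans_apply, P_apply, pf3, Equiv.coe_addLeft]
    congr 2
    abel
  conv_lhs => rw [B, Finset.sum_mul_sum, Finset.sum_mul]
  simp only [Finset.sum_mul]
  have : ∀ c d : Fin n, C (P i c) * C (P i d) * ∑ e : Fin n, C (P i e) = B (N := N) i := h
  simp only [this, Finset.sum_const, Finset.card_univ, Fintype.card_fin]
  rw [← Nat.cast_smul_eq_nsmul ℂ, ← Nat.cast_smul_eq_nsmul ℂ, smul_smul, sq]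

theorem filter_sum (x : Fin N → Fin n ⊕ Fin n) (g : (Fin N → Fin n ⊕ Fin n) → ℂ) :
    ∑ y ∈ Finset.univ.filter
            (fun y : Fin N → Fin n ⊕ Fin n =>
              ∃ i, (∀ k, k ≠ i → y k = x k) ∧ (x i).isLeft ≠ (y i).isLeft), g y
      = ∑ i, ∑ c, g (pf i c x) := by
  rw [← Fintype.sum_prod_type' (f := fun i c => g (pf i c x))]
  symm
  have hfl : ∀ (c : Fin n) (a : Fin n ⊕ Fin n), a.isLeft ≠ (fl c a).isLeft := by
    intro c a; rcases a with a | a <;> simp [fl]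
  refine Finset.sum_bij (fun q _ => pf q.1 q.2 x) ?_ ?_ ?_ ?_
  · rintro ⟨i, c⟩ -
    rw [Finset.mem_filter]
    refine ⟨Finset.mem_univ _, i, fun k hk => by simp [pf, hk], ?_⟩
    simpa [pf] using hfl c (x i)
  · rintro ⟨i, c⟩ - ⟨j, d⟩ - h
    simp only at h
    have hij : i = j := by
      by_contra hij
      have := congrFun h i
      simp only [pf, Function.update_self, Function.update_of_ne hij] at this
      exact hfl c (x i) (by rw [this])
    subst hij
    have := congrFun h i
    simp only [pf, Function.update_self] at this
    congr 1
    rcases hx : x i with a | a <;> simpa [hx, fl] using this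
  · intro y hy
    obtain ⟨-, i, h1, h2⟩ := Finset.mem_filter.1 hy
    have : ∃ c, fl c (x i) = y i := by
      rcases hx : x i with a | a <;> rcases hy : y i with b | b <;> simp [hx, hy] at h2 <;>
      exact ⟨b + a, by simp [fl]⟩
    obtain ⟨c, hc⟩ := this
    refine ⟨(i, c), Finset.mem_univ _, ?_⟩
    ext1 k
    by_cases hk : k = i
    · subst hk; simp [pf, hc]
    · simp [pf, hk, h1 k hk]
  · intros; rfl

theorem exists_f (hn : 5 ≤ n) (ε : ℤ) (hε : ε = 0 ∨ ε = 1 ∨ ε = -1) :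
    ∃ f : Fin n ⊕ Fin n → ℂ, f (.inl 0) = 1 ∧ ∀ a, ∑ c, f (fl c a) = (ε * n) * f a := by
  have hL : ∀ (f : Fin n ⊕ Fin n → ℂ) a, ∑ c, f (fl c (.inl a)) = ∑ c, f (.inr c) := by
    intro f a
    exact Equiv.sum_comp (Equiv.subRight a) (fun c => f (.inr c))
  have hR : ∀ (f : Fin n ⊕ Fin n → ℂ) a, ∑ c, f (fl c (.inr a)) = ∑ c, f (.inl c) := by
    intro f a
    exact Equiv.sum_comp (Equiv.subRight a) (fun c => f (.inl c))
  rcases hε with rfl | hε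
  · have h01 : (0 : Fin n) ≠ ⟨1, by omega⟩ := by
      intro h
      have := congrArg Fin.val h
      simp at this
    refine ⟨Sum.elim (fun a => (if a = 0 then 1 else 0) - (if a = ⟨1, by omega⟩ then 1 else 0))
      (fun _ => 0), by simp [h01], ?_⟩
    rintro (a | a)
    · rw [hL]; simp
    · rw [hR]; simp
  · refine ⟨Sum.elim (fun _ => 1) (fun _ => (ε : ℂ)), by simp, ?_⟩
    rintro (a | a)
    · rw [hL]; simp [mul_comm]
    · rw [hR]
      rcases hε with rfl | rfl <;> simp

theorem exists_eps (j : ℤ) (h1 : -(N : ℤ) ≤ j) (h2 : j ≤ N) :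
    ∃ ε : Fin N → ℤ, (∀ i, ε i = 0 ∨ ε i = 1 ∨ ε i = -1) ∧ ∑ i, ε i = j := by
  obtain ⟨s, -, hs⟩ := Finset.exists_subset_card_eq (s := (Finset.univ : Finset (Fin N)))
    (n := j.natAbs) (by simp; omega)
  refine ⟨fun i => if i ∈ s then j.sign else 0, fun i => ?_, ?_⟩
  · have := Int.sign_trichotomy j
    simp only
    split_ifs <;> tauto
  · simp only [Finset.sum_ite_mem, Finset.univ_inter, Finset.sum_const, hs, nsmul_eq_mul]
    rw [mul_comm]
    exact Int.sign_mul_natAbs j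

theorem exists_v (hn : 5 ≤ n) (j : ℤ) (h1 : -(N : ℤ) ≤ j) (h2 : j ≤ N) :
    ∃ v : (Fin N → Fin n ⊕ Fin n) → ℂ, v (fun _ => .inl 0) = 1 ∧
      ∀ x, ∑ i, ∑ c, v (pf i c x) = (j * n) * v x := by
  obtain ⟨ε, hε, hj⟩ := exists_eps j h1 h2
  choose f hf0 hf using fun i => exists_f hn (ε i) (hε i)
  refine ⟨fun x => ∏ i, f i (x i), by simp [hf0], fun x => ?_⟩
  have : ∀ i, ∑ c, ∏ k, f k (pf i c x k) = (ε i * n) * ∏ k, f k (x k) := by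
    intro i
    have hp : ∀ c, ∏ k, f k (pf i c x k) = f i (fl c (x i)) * ∏ k ∈ Finset.univ.erase i, f k (x k) := by
      intro c
      rw [← Finset.mul_prod_erase _ _ (Finset.mem_univ i)]
      congr 1
      · simp [pf]
      · refine Finset.prod_congr rfl fun k hk => ?_
        simp [pf, Finset.ne_of_mem_erase hk]
    simp only [hp]
    rw [← Finset.sum_mul, hf, ← Finset.mul_prod_erase _ (fun k => f k (x k)) (Finset.mem_univ i)]
    ring
  simp only [this]
  rw [← Finset.sum_mul, ← Finset.sum_mul, ← hj]
  push_cast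
  rfl

theorem dual (v : (Fin N → Fin n ⊕ Fin n) → ℂ) (μ : ℂ)
    (hv : ∀ x, ∑ i, ∑ c, v (pf i c x) = μ * v x) (g : (Fin N → Fin n ⊕ Fin n) → ℂ) :
    ∑ x, v x * ∑ i, ∑ c, g (pf i c x) = μ * ∑ x, v x * g x := by
  simp only [Finset.mul_sum]
  have h : ∀ (i : Fin N) (c : Fin n), ∑ x, v x * g (pf i c x) = ∑ x, v (pf i c x) * g x := by
    intro i c
    rw [← Equiv.sum_comp (pf_pf i c).toPerm]
    refine Finset.sum_congr rfl fun x _ => ?_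
    simp only [Function.Involutive.coe_toPerm, pf_pf i c x]
  rw [Finset.sum_comm]
  simp only [← mul_assoc, ← hv, Finset.sum_mul]
  conv_rhs => rw [Finset.sum_comm]
  refine Finset.sum_congr rfl fun i _ => ?_
  rw [Finset.sum_comm]
  conv_rhs => rw [Finset.sum_comm]
  exact Finset.sum_congr rfl fun c _ => h i c

theorem mem_spec (A : H (V N n) →L[ℂ] H (V N n))
    (hA : ∀ ξ m x, A ξ (m, x) = ξ (m - 1, x) + ξ (m + 1, x) + ∑ i, ∑ c, ξ (m, pf i c x))
    (v : (Fin N → Fin n ⊕ Fin n) → ℂ) (μ z : ℂ) (hz : ‖z‖ = 1)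
    (x0 : Fin N → Fin n ⊕ Fin n) (hv0 : v x0 = 1)
    (hv : ∀ x, ∑ i, ∑ c, v (pf i c x) = μ * v x) : μ + (z + z⁻¹) ∈ spectrum ℂ A := by
  intro hu
  change IsUnit _ at hu
  obtain ⟨R, hR⟩ := hu.exists_right_inv
  set ξ : H (V N n) := R (lp.single 2 ((0 : ℤ), x0) 1) with hξ
  have hx : ∀ m x, (μ + (z + z⁻¹)) * ξ (m, x) -
      (ξ (m - 1, x) + ξ (m + 1, x) + ∑ i, ∑ c, ξ (m, pf i c x)) =
      (Pi.single ((0 : ℤ), x0) (1 : ℂ) : V N n → ℂ) (m, x) := by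
    intro m x
    have h := congrArg (fun F : H (V N n) →L[ℂ] H (V N n) =>
      F (lp.single 2 ((0 : ℤ), x0) 1) (m, x)) hR
    rw [← hA]
    exact h
  set g : ℤ → ℂ := fun m => ∑ x, v x * ξ (m, x) with hg
  have hrec : ∀ m, (z + z⁻¹) * g m - (g (m - 1) + g (m + 1)) = if m = 0 then 1 else 0 := by
    intro m
    have h := Finset.sum_congr (rfl : (Finset.univ : Finset (Fin N → Fin n ⊕ Fin n)) = _)
      (fun x _ => congrArg (fun t => v x * t) (hx m x))
    have hd := dual v μ hv (fun x => ξ (m, x))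
    simp only [mul_sub, mul_add, Finset.sum_sub_distrib, Finset.sum_add_distrib] at h
    rw [hd] at h
    have hr : ∑ x, v x * (Pi.single ((0 : ℤ), x0) (1 : ℂ) : V N n → ℂ) (m, x) =
        if m = 0 then 1 else 0 := by
      simp only [Pi.single_apply, Prod.mk.injEq]
      split_ifs with h0
      · simp [h0, hv0]
      · simp [h0]
    rw [hr] at h
    rw [← h]
    simp only [hg, mul_left_comm _ ((μ + (z + z⁻¹))), ← Finset.mul_sum]
    ring
  have hsum : ∀ x, Filter.Tendsto (fun m : ℤ => ξ (m, x)) Filter.cofinite (nhds 0) := by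
    intro x
    have h1 := ((lp.memℓp ξ).summable two_pos).tendsto_cofinite_zero
    have h2 : Filter.Tendsto (fun i => ‖ξ i‖) Filter.cofinite (nhds 0) := by
      have := h1.rpow_const (p := 1 / 2) (Or.inr (by norm_num))
      norm_num at this
      refine this.congr fun i => ?_
      rw [← Real.sqrt_eq_rpow, Real.sqrt_sq (norm_nonneg _)]
    rw [tendsto_zero_iff_norm_tendsto_zero]
    exact h2.comp (Function.Injective.tendsto_cofinite fun a b h => (Prod.mk.inj h).1)
  have hgt : Filter.Tendsto g Filter.cofinite (nhds 0) := by
    have := tendsto_finsetSum (Finset.univ : Finset (Fin N → Fin n ⊕ Fin n))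
      (fun x _ => (hsum x).const_mul (v x))
    simpa using this
  have hp := rec_zero z hz (fun k => g k) (by
    intro k
    have := hrec (k + 1)
    rw [if_neg (by omega)] at this
    push_cast
    rw [show (k : ℤ) + 2 = k + 1 + 1 by ring]
    rw [show (k : ℤ) + 1 - 1 = k by ring] at this
    linear_combination -this) (by
      rw [← Nat.cofinite_eq_atTop]
      exact hgt.comp (Function.Injective.tendsto_cofinite fun a b h => by exact_mod_cast h))
  have hm := rec_zero z hz (fun k => g (-k)) (by
    intro k
    have := hrec (-(k + 1))
    rw [if_neg (by omega)] at this
    push_cast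
    rw [show -((k : ℤ) + 2) = -(k + 1) - 1 by ring]
    rw [show -((k : ℤ) + 1) + 1 = -k by ring] at this
    linear_combination -this) (by
      rw [← Nat.cofinite_eq_atTop]
      exact hgt.comp (Function.Injective.tendsto_cofinite fun a b h => by
        simpa using h))
  have h0 := hrec 0
  have a0 := hp 0
  have a1 := hp 1
  have a2 := hm 1
  simp only [Nat.cast_zero, Nat.cast_one] at a0 a1 a2
  rw [zero_sub, zero_add, a0, a1, a2] at h0
  simp at h0

end graph

end LineSum

/-- For `n ≥ 5` and `N ≥ 1`, the spectrum of the adjacency operator of the graph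
sum `L + N·K_{n,n}` of the bi-infinite line with `N` copies of the complete
bipartite graph `K_{n,n}` is the union of the `2N+1` pairwise disjoint intervals
of length `4` centered at the points `j·n` for `j = −N, …, N`. -/
theorem spectrum_line_sum_bipartite (N n : ℕ) (hN : 1 ≤ N) (hn : 5 ≤ n)
    (A : lp (fun _ : ℤ × (Fin N → Fin n ⊕ Fin n) => ℂ) 2 →L[ℂ]
         lp (fun _ : ℤ × (Fin N → Fin n ⊕ Fin n) => ℂ) 2)
    (hA : ∀ (ξ : lp (fun _ : ℤ × (Fin N → Fin n ⊕ Fin n) => ℂ) 2) (m : ℤ)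
        (x : Fin N → Fin n ⊕ Fin n),
      A ξ (m, x) = ξ (m - 1, x) + ξ (m + 1, x) +
        ∑ y ∈ Finset.univ.filter
            (fun y : Fin N → Fin n ⊕ Fin n =>
              ∃ i, (∀ k, k ≠ i → y k = x k) ∧ (x i).isLeft ≠ (y i).isLeft),
          ξ (m, y)) :
    (spectrum ℂ A =
      ⋃ j ∈ Finset.Icc (-(N : ℤ)) (N : ℤ), (fun x : ℝ => (x : ℂ)) ''
        Set.Icc ((j : ℝ) * n - 2) ((j : ℝ) * n + 2)) ∧
    ∀ i ∈ Finset.Icc (-(N : ℤ)) (N : ℤ), ∀ j ∈ Finset.Icc (-(N : ℤ)) (N : ℤ),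
      i ≠ j →
      Disjoint (Set.Icc ((i : ℝ) * n - 2) ((i : ℝ) * n + 2))
               (Set.Icc ((j : ℝ) * n - 2) ((j : ℝ) * n + 2)) := by
  haveI : NeZero n := ⟨by omega⟩
  refine ⟨?_, ?_⟩
  · have hA' : ∀ (ξ : LineSum.H (LineSum.V N n)) m x, A ξ (m, x) =
        ξ (m - 1, x) + ξ (m + 1, x) + ∑ i, ∑ c, ξ (m, LineSum.pf i c x) := by
      intro ξ m x
      rw [hA, ← LineSum.filter_sum x (fun y => ξ (m, y))]
    ext l
    simp only [Set.mem_iUnion, Set.mem_image, Finset.mem_Icc, exists_prop]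
    constructor
    · intro hl
      have hAe : A = (LineSum.C (LineSum.Sh N n) + LineSum.C (LineSum.Sh N n).symm) +
          ∑ i, LineSum.B i := by
        ext ξ q
        obtain ⟨m, x⟩ := q
        rw [hA' ξ m x]
        simp only [ContinuousLinearMap.add_apply, lp.coeFn_add, Pi.add_apply,
          sum_apply, lp.coeFn_sum, Finset.sum_apply, LineSum.B_apply,
          LineSum.C_apply, LineSum.Sh_apply, LineSum.Sh_symm_apply]
        ring
      rw [hAe] at hl
      obtain ⟨j, h1, h2, h3⟩ := LineSum.steps _ _ (n : ℂ) LineSum.T_comm LineSum.B_comm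
        LineSum.B_cube Finset.univ l hl
      obtain ⟨t, ht, htl⟩ := LineSum.spec_T _ _ h3
      rw [Finset.card_univ, Fintype.card_fin] at h1 h2
      refine ⟨j, ⟨h1, h2⟩, j * n + t, ⟨by linarith [ht.1], by linarith [ht.2]⟩, ?_⟩
      push_cast
      rw [← htl]
      ring
    · rintro ⟨j, ⟨h1, h2⟩, t, ht, rfl⟩
      obtain ⟨z, hz, hzt⟩ := LineSum.exists_z_real (t - j * n)
        ⟨by linarith [ht.1], by linarith [ht.2]⟩
      obtain ⟨v, hv0, hv⟩ := LineSum.exists_v (N := N) hn j h1 h2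
      have := LineSum.mem_spec A hA' v (j * n) z hz _ hv0 hv
      rw [hzt] at this
      convert this using 1
      push_cast
      ring
  · intro i _ j _ hij
    rw [Set.disjoint_left]
    rintro x ⟨a1, a2⟩ ⟨b1, b2⟩
    have hn' : (5 : ℝ) ≤ n := by exact_mod_cast hn
    rcases lt_or_gt_of_ne hij with h | h
    · have h' : (i : ℝ) + 1 ≤ j := by exact_mod_cast h
      nlinarith
    · have h' : (j : ℝ) + 1 ≤ i := by exact_mod_cast h
      nlinarith
end

section
/- For every integer N ≥ 1 there exists a finitely generated group Γ with finite symmetric generating set S (not containing the identity) such that the spectrum of the adjacency operator of the Cayley graph Cay(Γ, S) on ℓ²(Γ) is a disjoint union of exactly N nondegenerate closed intervals. -/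
noncomputable section
namespace Band

abbrev H (Γ : Type) := lp (fun _ : Γ => ℂ) 2

section R
variable {Γ : Type} [CommGroup Γ]

theorem mem_shift (h : Γ) (ξ : H Γ) : Memℓp (fun g : Γ => ξ (g * h)) 2 := by
  have := lp.memℓp ξ
  rw [memℓp_gen_iff (by norm_num)] at this ⊢
  exact (Equiv.mulRight h).summable_iff.mpr this

def Riso (h : Γ) : H Γ →ₗᵢ[ℂ] H Γ where
  toFun ξ := ⟨fun g => ξ (g * h), mem_shift h ξ⟩
  map_add' ξ η := by ext g; rfl
  map_smul' c ξ := by ext g; rfl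
  norm_map' ξ := by
    rw [lp.norm_eq_tsum_rpow (by norm_num), lp.norm_eq_tsum_rpow (by norm_num)]
    congr 1
    exact (Equiv.mulRight h).tsum_eq (fun g => ‖ξ g‖ ^ (2 : ENNReal).toReal)

def R (h : Γ) : H Γ →L[ℂ] H Γ := (Riso h).toContinuousLinearMap

theorem R_apply (h : Γ) (ξ : H Γ) (g : Γ) : R h ξ g = ξ (g * h) := rfl

theorem R_mul (a b : Γ) : R a * R b = R (a * b) := by
  ext ξ g
  show ξ (g * a * b) = ξ (g * (a * b))
  rw [mul_assoc]

theorem R_comm (a b : Γ) : Commute (R a) (R b) := by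
  rw [Commute, SemiconjBy, R_mul, R_mul, mul_comm]

theorem R_one : R (1 : Γ) = 1 := by
  ext ξ g
  show ξ (g * 1) = ξ g
  rw [mul_one]

theorem R_norm (h : Γ) : ‖R h‖ ≤ 1 := (Riso h).norm_toContinuousLinearMap_le

theorem R_adj (h : Γ) : star (R h) = R h⁻¹ := by
  have h1 : star (R h) * R h = 1 := by
    rw [ContinuousLinearMap.star_eq_adjoint]
    exact (ContinuousLinearMap.norm_map_iff_adjoint_comp_self (R h)).1 (Riso h).norm_map
  calc star (R h) = star (R h) * (R h * R h⁻¹) := by rw [R_mul, mul_inv_cancel, R_one, mul_one]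
    _ = _ := by rw [← mul_assoc, h1, one_mul]

theorem spec_B (h : Γ) (μ : ℂ) (hμ : μ ∈ spectrum ℂ (R h + R h⁻¹)) :
    ∃ x : ℝ, x ∈ Set.Icc (-2) 2 ∧ (x : ℂ) = μ := by
  have hs : IsSelfAdjoint (R h + R h⁻¹) := by
    rw [IsSelfAdjoint, star_add, R_adj, R_adj, inv_inv, add_comm]
  have h1 := hs.mem_spectrum_eq_re hμ
  have h2 : ‖μ‖ ≤ 2 := by
    have hone : ‖(1 : H Γ →L[ℂ] H Γ)‖ ≤ 1 := ContinuousLinearMap.norm_id_le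
    have := spectrum.norm_le_norm_mul_of_mem hμ
    have h3 := norm_add_le (R h) (R h⁻¹)
    have := R_norm h
    have := R_norm h⁻¹
    nlinarith [norm_nonneg (R h + R h⁻¹), norm_nonneg (1 : H Γ →L[ℂ] H Γ)]
  exact ⟨μ.re, abs_le.1 ((Complex.abs_re_le_norm μ).trans h2), h1.symm⟩

end R

section alg
variable {𝔸 : Type*} [Ring 𝔸] [Algebra ℂ 𝔸]

theorem step (X Q : 𝔸) (hc : Commute X Q) (hQ : Q * Q = (5 : ℂ) • Q) (μ : ℂ)
    (h1 : μ + 1 ∉ spectrum ℂ X) (h2 : μ - 4 ∉ spectrum ℂ X) :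
    μ ∉ spectrum ℂ (X + (Q - 1)) := by
  rw [spectrum.notMem_iff] at *
  obtain ⟨u, hu⟩ := h1
  obtain ⟨v, hv⟩ := h2
  have cu : Commute (u : 𝔸) Q := by
    rw [hu]; exact (Algebra.commute_algebraMap_left _ _).sub_left hc
  have cv : Commute (v : 𝔸) Q := by
    rw [hv]; exact (Algebra.commute_algebraMap_left _ _).sub_left hc
  set P : 𝔸 := (1/5 : ℂ) • Q with hP
  have hQP : Q = (5 : ℂ) • P := by rw [hP, smul_smul]; norm_num
  have hPP : P * P = P := by
    rw [hP, smul_mul_smul_comm, hQ, smul_smul]; norm_num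
  have cu' : Commute (u : 𝔸) P := cu.smul_right _
  have cv' : Commute (v : 𝔸) P := cv.smul_right _
  have ci : Commute (↑u⁻¹ : 𝔸) P := cu'.units_inv_left
  have di : Commute (↑v⁻¹ : 𝔸) P := cv'.units_inv_left
  have key : algebraMap ℂ 𝔸 μ - (X + (Q - 1)) = u * (1 - P) + v * P := by
    have e : (v : 𝔸) = u - (5 : ℂ) • 1 := by
      rw [hu, hv, Algebra.algebraMap_eq_smul_one, Algebra.algebraMap_eq_smul_one]; module
    rw [e, sub_mul, mul_sub, smul_mul_assoc, one_mul, ← hQP, hu, map_add, map_one]; noncomm_ring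
  rw [key]
  have o1 : (1 - P) * P = 0 := by rw [sub_mul, hPP, one_mul, sub_self]
  have o2 : P * (1 - P) = 0 := by rw [mul_sub, hPP, mul_one, sub_self]
  have o3 : (1 - P) * (1 - P) = 1 - P := by rw [mul_sub, o1, mul_one, sub_zero]
  have cu1 : Commute (u : 𝔸) (1 - P) := (Commute.one_right _).sub_right cu'
  have cv1 : Commute (v : 𝔸) (1 - P) := (Commute.one_right _).sub_right cv'
  have ci1 : Commute (↑u⁻¹ : 𝔸) (1 - P) := (Commute.one_right _).sub_right ci
  have di1 : Commute (↑v⁻¹ : 𝔸) (1 - P) := (Commute.one_right _).sub_right di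
  refine ⟨⟨_, ↑u⁻¹ * (1 - P) + ↑v⁻¹ * P, ?_, ?_⟩, rfl⟩
  · rw [add_mul, mul_add, mul_add, ci1.symm.mul_mul_mul_comm, di.symm.mul_mul_mul_comm,
      di1.symm.mul_mul_mul_comm, ci.symm.mul_mul_mul_comm]
    simp [o1, o2, o3, hPP]
  · rw [add_mul, mul_add, mul_add, cu1.symm.mul_mul_mul_comm, cv'.symm.mul_mul_mul_comm,
      cv1.symm.mul_mul_mul_comm, cu'.symm.mul_mul_mul_comm]
    simp [o1, o2, o3, hPP]

theorem steps {ι : Type*} [DecidableEq ι] (B : 𝔸) (Q : ι → 𝔸) (hB : ∀ i, Commute B (Q i))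
    (hcc : ∀ i j, Commute (Q i) (Q j)) (hQ : ∀ i, Q i * Q i = (5 : ℂ) • Q i) (s : Finset ι) :
    ∀ μ ∈ spectrum ℂ (B + ∑ i ∈ s, (Q i - 1)),
      ∃ k : ℕ, k ≤ s.card ∧ μ - (5 * k - s.card) ∈ spectrum ℂ B := by
  induction s using Finset.induction_on with
  | empty => intro μ h; exact ⟨0, le_rfl, by simpa using h⟩
  | insert i s hi ih =>
    intro μ h
    rw [Finset.sum_insert hi, add_comm (Q i - 1), ← add_assoc] at h
    have hc : Commute (B + ∑ j ∈ s, (Q j - 1)) (Q i) :=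
      (hB i).add_left (Commute.sum_left _ _ _ fun j _ => (hcc j i).sub_left (Commute.one_left _))
    rw [Finset.card_insert_of_notMem hi]
    by_cases h1 : μ + 1 ∈ spectrum ℂ (B + ∑ j ∈ s, (Q j - 1))
    · obtain ⟨k, hk, h⟩ := ih _ h1
      refine ⟨k, by omega, ?_⟩
      convert h using 1
      push_cast; ring
    by_cases h2 : μ - 4 ∈ spectrum ℂ (B + ∑ j ∈ s, (Q j - 1))
    · obtain ⟨k, hk, h⟩ := ih _ h2
      refine ⟨k + 1, by omega, ?_⟩
      convert h using 1
      push_cast; ring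
    exact absurd h (step _ _ hc (hQ i) μ h1 h2)

end alg

theorem decay_contra (η : ℤ → ℂ) (hη : Filter.Tendsto η Filter.cofinite (nhds 0)) (z : ℂ)
    (hz : ‖z‖ = 1)
    (h : ∀ k, (z + z⁻¹) * η k - η (k + 1) - η (k - 1) = if k = 0 then 1 else 0) : False := by
  have hz0 : z ≠ 0 := by rintro rfl; simp at hz
  set w : ℤ → ℂ := fun k => η (k + 1) - z * η k with hw
  have hwt : Filter.Tendsto w Filter.cofinite (nhds 0) := by
    have h1 := hη.comp (add_left_injective (1 : ℤ)).tendsto_cofinite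
    simpa using h1.sub (hη.const_mul z)
  have hrec : ∀ k, z⁻¹ * w (k - 1) - w k = if k = 0 then 1 else 0 := by
    intro k
    rw [← h k, hw]
    simp only [sub_add_cancel]
    field_simp
    ring
  have hnorm : ∀ k, k ≠ 0 → ‖w k‖ = ‖w (k - 1)‖ := by
    intro k hk
    have := hrec k
    rw [if_neg hk, sub_eq_zero] at this
    rw [← this, norm_mul, norm_inv, hz, inv_one, one_mul]
  have hp : ∀ n : ℕ, ‖w n‖ = ‖w 0‖ := by
    intro n
    induction n with
    | zero => simp
    | succ n ih =>
      rw [hnorm _ (by positivity), ← ih]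
      push_cast
      rw [add_sub_cancel_right]
  have hm : ∀ n : ℕ, ‖w (-1 - n)‖ = ‖w (-1)‖ := by
    intro n
    induction n with
    | zero => simp
    | succ n ih =>
      rw [← ih, hnorm (-1 - n) (by omega)]
      push_cast
      rw [sub_sub]
  have z0 : w 0 = 0 := by
    have t := (hwt.comp (Nat.cast_injective (R := ℤ)).tendsto_cofinite).norm
    rw [Nat.cofinite_eq_atTop] at t
    have t' := t.congr hp
    simpa using tendsto_nhds_unique tendsto_const_nhds t'
  have zm : w (-1) = 0 := by
    have inj : Function.Injective (fun n : ℕ => (-1 - (n : ℤ))) := by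
      intro a b hab
      simp only at hab
      omega
    have t := (hwt.comp inj.tendsto_cofinite).norm
    rw [Nat.cofinite_eq_atTop] at t
    have t' := t.congr hm
    simpa using tendsto_nhds_unique tendsto_const_nhds t'
  have := hrec 0
  simp [z0, zm] at this

abbrev G (m : ℕ) := Multiplicative (ℤ × (Fin m → ZMod 5))

def el {m : ℕ} (k : ℤ) (f : Fin m → ZMod 5) : G m := Multiplicative.ofAdd (k, f)

theorem el_mul {m : ℕ} (k l : ℤ) (f g : Fin m → ZMod 5) :
    el k f * el l g = el (k + l) (f + g) := rfl

theorem el_inj {m : ℕ} {k l : ℤ} {f g : Fin m → ZMod 5} :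
    el k f = el l g ↔ k = l ∧ f = g := by
  unfold el
  rw [Multiplicative.ofAdd.injective.eq_iff, Prod.mk.injEq]

theorem el_inv {m : ℕ} (k : ℤ) (f : Fin m → ZMod 5) : (el k f)⁻¹ = el (-k) (-f) := rfl

theorem one_eq (m : ℕ) : (1 : G m) = el 0 0 := rfl

def e (m : ℕ) : Bool ⊕ (Fin m × {a : ZMod 5 // a ≠ 0}) → G m
  | Sum.inl true => el 1 0
  | Sum.inl false => el (-1) 0
  | Sum.inr p => el 0 (Pi.single p.1 p.2.1)

theorem e_inj (m : ℕ) : Function.Injective (e m) := by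
  rintro (a | ⟨i, a, ha⟩) (b | ⟨j, b, hb⟩) h
  · cases a <;> cases b <;> simp [e, el_inj] at h ⊢
  · cases a <;> simp [e, el_inj] at h
  · cases b <;> simp [e, el_inj] at h
  · simp only [e, el_inj, true_and] at h
    have hij : i = j := by
      by_contra hne
      have := congrFun h i
      rw [Pi.single_eq_same, Pi.single_eq_of_ne hne] at this
      exact ha this
    subst hij
    have := Pi.single_injective i h
    subst this
    rfl

def S (m : ℕ) : Finset (G m) := Finset.univ.image (e m)

theorem sum_S (m : ℕ) {M : Type*} [AddCommGroup M] (F : G m → M) :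
    ∑ s ∈ S m, F s = F (el 1 0) + F (el (-1) 0) +
      ∑ i, ((∑ a : ZMod 5, F (el 0 (Pi.single i a))) - F 1) := by
  rw [S, Finset.sum_image (fun a _ b _ h => e_inj m h), Fintype.sum_sum_type,
    Fintype.sum_bool, Fintype.sum_prod_type]
  congr 1
  refine Finset.sum_congr rfl fun i _ => ?_
  rw [eq_sub_iff_add_eq]
  have := Fintype.sum_subtype_add_sum_subtype (fun a : ZMod 5 => a ≠ 0)
    (fun a => F (el 0 (Pi.single i a)))
  rw [← this]
  congr 1
  have : ∀ x : {a : ZMod 5 // ¬ a ≠ 0}, F (el 0 (Pi.single i x.1)) = F 1 := by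
    rintro ⟨x, hx⟩
    have : x = 0 := not_not.1 hx
    subst this
    rw [Pi.single_zero, one_eq]
  rw [Finset.sum_congr rfl fun x _ => this x, Finset.sum_const]
  have hcard : Finset.card (Finset.univ : Finset {a : ZMod 5 // ¬ a ≠ 0}) = 1 := by decide
  rw [hcard, one_smul]

theorem closure_S (m : ℕ) : Subgroup.closure (S m : Set (G m)) = ⊤ := by
  have hm : ∀ x, e m x ∈ Subgroup.closure (S m : Set (G m)) := fun x =>
    Subgroup.subset_closure (by simp [S])
  rw [eq_top_iff]
  rintro g -
  obtain ⟨k, f⟩ := g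
  have : (el k f : G m) = el 1 0 ^ k * ∏ i, el 0 (Pi.single i (f i)) := by
    apply Multiplicative.toAdd.injective
    rw [toAdd_mul, toAdd_zpow, toAdd_prod]
    simp only [el, toAdd_ofAdd]
    ext j
    · simp [Prod.fst_sum]
    · simp [Prod.snd_sum, Finset.sum_apply, Pi.single_apply]
  change el k f ∈ _
  rw [this]
  refine Subgroup.mul_mem _ (Subgroup.zpow_mem _ (hm (Sum.inl true)) _)
    (Subgroup.prod_mem _ fun i _ => ?_)
  by_cases h : f i = 0
  · rw [h, Pi.single_zero, ← one_eq]; exact Subgroup.one_mem _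
  · exact hm (Sum.inr (i, ⟨f i, h⟩))

theorem inv_S (m : ℕ) : ∀ s ∈ S m, s⁻¹ ∈ S m := by
  intro s hs
  simp only [S, Finset.mem_image, Finset.mem_univ, true_and] at hs ⊢
  obtain ⟨x, rfl⟩ := hs
  rcases x with (a | ⟨i, a, ha⟩)
  · cases a
    · exact ⟨Sum.inl true, by simp [e, el_inv]⟩
    · exact ⟨Sum.inl false, by simp [e, el_inv]⟩
  · exact ⟨Sum.inr (i, ⟨-a, neg_ne_zero.2 ha⟩), by simp [e, el_inv, Pi.single_neg]⟩

theorem one_S (m : ℕ) : (1 : G m) ∉ S m := by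
  intro hs
  simp only [S, Finset.mem_image, Finset.mem_univ, true_and] at hs
  obtain ⟨x, hx⟩ := hs
  rcases x with (a | ⟨i, a, ha⟩)
  · cases a <;> simp [e, one_eq, el_inj] at hx
  · simp [e, one_eq, el_inj, ha] at hx

def Q {m : ℕ} (i : Fin m) : H (G m) →L[ℂ] H (G m) := ∑ a : ZMod 5, R (el 0 (Pi.single i a))

theorem Q_sq {m : ℕ} (i : Fin m) : Q i * Q i = (5 : ℂ) • Q i := by
  have h : ∀ a : ZMod 5, R (el 0 (Pi.single i a)) * Q i = Q i := by
    intro a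
    unfold Q
    rw [Finset.mul_sum]
    simp only [R_mul, el_mul, ← Pi.single_add, add_zero]
    exact Equiv.sum_comp (Equiv.addLeft a) (fun b => R (el 0 (Pi.single i b)))
  conv_lhs => enter [1]; unfold Q
  rw [Finset.sum_mul, Finset.sum_congr rfl fun a _ => h a, Finset.sum_const, Finset.card_univ,
    ZMod.card, ← Nat.cast_smul_eq_nsmul ℂ]
  norm_num

theorem Q_comm {m : ℕ} (i : Fin m) (g : G m) : Commute (R g) (Q i) :=
  Commute.sum_right _ _ _ fun _ _ => R_comm _ _

theorem A_eq {m : ℕ} (A : H (G m) →L[ℂ] H (G m))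
    (hA : ∀ (ξ : H (G m)) (g : G m), A ξ g = ∑ s ∈ S m, ξ (g * s)) :
    A = R (el 1 0) + R (el 1 0)⁻¹ + ∑ i, (Q i - 1) := by
  have h1 : A = ∑ s ∈ S m, R s := by
    ext ξ g
    rw [hA, _root_.sum_apply, lp.coeFn_sum, Finset.sum_apply]
    rfl
  rw [h1, sum_S, R_one, el_inv, neg_zero]
  rfl

/-- Partial Fourier transform. -/
def Lf {m : ℕ} (c : Fin m → ZMod 5) (ξ : H (G m)) (k : ℤ) : ℂ :=
  ∑ f : Fin m → ZMod 5, ξ (el k f) * ZMod.stdAddChar (c ⬝ᵥ f)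

theorem Lf_sub {m : ℕ} (c : Fin m → ZMod 5) (ξ ζ : H (G m)) (k : ℤ) :
    Lf c (ξ - ζ) k = Lf c ξ k - Lf c ζ k := by
  simp [Lf, sub_mul]

theorem Lf_add {m : ℕ} (c : Fin m → ZMod 5) (ξ ζ : H (G m)) (k : ℤ) :
    Lf c (ξ + ζ) k = Lf c ξ k + Lf c ζ k := by
  simp [Lf, add_mul, Finset.sum_add_distrib]

theorem Lf_smul {m : ℕ} (c : Fin m → ZMod 5) (μ : ℂ) (ξ : H (G m)) (k : ℤ) :
    Lf c (μ • ξ) k = μ * Lf c ξ k := by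
  simp [Lf, Finset.mul_sum, mul_assoc]

theorem Lf_sum {m : ℕ} (c : Fin m → ZMod 5) {ι : Type*} (s : Finset ι) (ξ : ι → H (G m)) (k : ℤ) :
    Lf c (∑ i ∈ s, ξ i) k = ∑ i ∈ s, Lf c (ξ i) k := by
  simp only [Lf, lp.coeFn_sum, Finset.sum_apply, Finset.sum_mul]
  exact Finset.sum_comm

theorem Lf_R {m : ℕ} (c : Fin m → ZMod 5) (ξ : H (G m)) (k l : ℤ) (h : Fin m → ZMod 5) :
    Lf c (R (el l h) ξ) k = Lf c ξ (k + l) * ZMod.stdAddChar (-(c ⬝ᵥ h)) := by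
  simp only [Lf, R_apply, el_mul]
  rw [← Equiv.sum_comp (Equiv.addRight (-h)), Finset.sum_mul]
  refine Finset.sum_congr rfl fun f _ => ?_
  simp only [Equiv.coe_addRight, neg_add_cancel_right, dotProduct_add, AddChar.map_add_eq_mul,
    dotProduct_neg, mul_assoc]

theorem Lf_Q {m : ℕ} (c : Fin m → ZMod 5) (ξ : H (G m)) (k : ℤ) (i : Fin m) :
    Lf c (Q i ξ) k = Lf c ξ k * (if c i = 0 then 5 else 0) := by
  have := AddChar.sum_mulShift (-(c i)) (ZMod.isPrimitive_stdAddChar 5)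
  rw [Q, _root_.sum_apply, Lf_sum]
  simp only [Lf_R, add_zero, ← Finset.mul_sum, dotProduct_single]
  congr 1
  simp only [neg_eq_zero, ZMod.card] at this
  refine Eq.trans (Finset.sum_congr rfl fun a _ => ?_) (this.trans ?_)
  · congr 1; ring
  · split_ifs <;> simp

theorem Lf_single {m : ℕ} (c : Fin m → ZMod 5) (k : ℤ) :
    Lf c (lp.single 2 (1 : G m) (1 : ℂ)) k = if k = 0 then 1 else 0 := by
  simp only [Lf, lp.single_apply, one_eq]
  rw [Finset.sum_eq_single 0]
  · by_cases hk : k = 0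
    · subst hk; simp
    · simp [hk, el_inj]
  · intro f _ hf
    simp [el_inj, hf]
  · simp

theorem Lf_decay {m : ℕ} (c : Fin m → ZMod 5) (ξ : H (G m)) :
    Filter.Tendsto (Lf c ξ) Filter.cofinite (nhds 0) := by
  have h0 : Filter.Tendsto (fun g => ξ g) Filter.cofinite (nhds 0) := by
    have h := (lp.memℓp ξ).summable (by norm_num)
    have h := h.tendsto_cofinite_zero
    rw [tendsto_zero_iff_norm_tendsto_zero]
    have h2 := h.sqrt
    simpa [Real.sqrt_sq] using h2
  have : Filter.Tendsto (Lf c ξ) Filter.cofinite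
      (nhds (∑ f : Fin m → ZMod 5, 0 * (ZMod.stdAddChar (c ⬝ᵥ f) : ℂ))) := by
    refine tendsto_finsetSum _ fun f _ => Filter.Tendsto.mul_const _ ?_
    have inj : Function.Injective (fun k : ℤ => (el k f : G m)) := fun a b h => (el_inj.1 h).1
    exact h0.comp inj.tendsto_cofinite
  simpa using this

theorem mem_spec {m : ℕ} (c : Fin m → ZMod 5) (z : ℂ) (hz : ‖z‖ = 1) :
    z + z⁻¹ + ∑ i, ((if c i = 0 then 5 else 0) - 1) ∈
      spectrum ℂ (R (el 1 0) + R (el 1 0)⁻¹ + ∑ i : Fin m, (Q i - 1)) := by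
  by_contra hn
  rw [spectrum.notMem_iff] at hn
  obtain ⟨u, hu⟩ := hn
  set δ : H (G m) := lp.single 2 (1 : G m) (1 : ℂ) with hδ
  set ξ : H (G m) := (↑u⁻¹ : H (G m) →L[ℂ] H (G m)) δ with hξ
  have h1 : (u : H (G m) →L[ℂ] H (G m)) ξ = δ := by
    have := congrArg (fun T : H (G m) →L[ℂ] H (G m) => T δ) u.mul_inv
    exact this
  rw [hu, Algebra.algebraMap_eq_smul_one] at h1
  refine decay_contra (Lf c ξ) (Lf_decay c ξ) z hz fun k => ?_
  rw [← Lf_single c k, ← hδ, ← h1]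
  simp only [_root_.sub_apply, _root_.add_apply,
    _root_.smul_apply, _root_.sum_apply, one_apply_eq_self,
    Lf_sub, Lf_add, Lf_smul, Lf_sum, el_inv, Lf_R, Lf_Q, neg_zero, dotProduct_zero,
    AddChar.map_zero_eq_one, mul_one]
  have : ∑ i, (Lf c ξ k * (if c i = 0 then 5 else 0) - Lf c ξ k) =
      Lf c ξ k * ∑ i, ((if c i = 0 then 5 else 0) - 1) := by
    rw [Finset.mul_sum]
    exact Finset.sum_congr rfl fun i _ => by ring
  rw [this, ← sub_eq_add_neg]
  ring

theorem main (m : ℕ) (A : H (G m) →L[ℂ] H (G m))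
    (hA : ∀ (ξ : H (G m)) (g : G m), A ξ g = ∑ s ∈ S m, ξ (g * s)) :
    spectrum ℂ A = {μ | ∃ k : ℕ, k ≤ m ∧ ∃ x : ℝ, x ∈ Set.Icc (-2) 2 ∧
      μ = ((x + (5 * k - m) : ℝ) : ℂ)} := by
  rw [A_eq A hA]
  ext μ
  constructor
  · intro h
    obtain ⟨k, hk, h⟩ := steps _ Q (fun i => (Q_comm i _).add_left (Q_comm i _))
      (fun i j => Commute.sum_left _ _ _ fun _ _ => Q_comm j _) Q_sq _ μ h
    obtain ⟨x, hx, hx2⟩ := spec_B _ _ h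
    rw [Finset.card_univ, Fintype.card_fin] at hk hx2
    refine ⟨k, hk, x, hx, ?_⟩
    push_cast
    rw [hx2]
    ring
  · rintro ⟨k, hk, x, hx, rfl⟩
    set z : ℂ := Complex.exp (Real.arccos (x / 2) * Complex.I) with hz
    have hzn : ‖z‖ = 1 := Complex.norm_exp_ofReal_mul_I _
    have hzz : z + z⁻¹ = x := by
      have hc : Real.cos (Real.arccos (x / 2)) = x / 2 :=
        Real.cos_arccos (by linarith [hx.1]) (by linarith [hx.2])
      have h2 := Complex.two_cos (Real.arccos (x / 2) : ℂ)
      rw [← Complex.ofReal_cos, hc] at h2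
      rw [hz, ← Complex.exp_neg, ← neg_mul, ← h2]
      push_cast
      ring
    convert mem_spec (m := m) (fun i => if (i : ℕ) < k then 0 else 1) z hzn using 1
    rw [hzz, Finset.sum_sub_distrib]
    have : ∑ i : Fin m, (if (if (i : ℕ) < k then (0 : ZMod 5) else 1) = 0 then (5 : ℂ) else 0)
        = 5 * k := by
      have h1 : ∀ i : Fin m, (if (if (i : ℕ) < k then (0 : ZMod 5) else 1) = 0 then (5 : ℂ) else 0)
          = if (i : ℕ) < k then 5 else 0 := by
        intro i
        by_cases h : (i : ℕ) < k
        · simp [h]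
        · have : (1 : ZMod 5) ≠ 0 := by decide
          simp [h, this]
      rw [Finset.sum_congr rfl fun i _ => h1 i,
        Fin.sum_univ_eq_sum_range (fun i => if i < k then (5 : ℂ) else 0), ← Finset.sum_filter,
        Finset.sum_const]
      have : (Finset.range m).filter (· < k) = Finset.range k := by
        ext a; simp; omega
      rw [this, Finset.card_range, nsmul_eq_mul, mul_comm]
    rw [this]
    simp

end Band
end



/-- For every `N ≥ 1` there is a group `Γ` with a finite symmetric generating
set `S` not containing the identity such that the spectrum of the adjacency
operator of `Cay(Γ, S)` on `ℓ²(Γ)` is the disjoint union of exactly `N`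
nondegenerate closed intervals. -/
theorem exists_cayley_band_spectrum (N : ℕ) (hN : 1 ≤ N) :
    ∃ (Γ : Type) (_ : Group Γ) (S : Finset Γ),
      S.Nonempty ∧
      (Subgroup.closure (S : Set Γ) = ⊤) ∧
      (∀ s ∈ S, s⁻¹ ∈ S) ∧
      (1 : Γ) ∉ S ∧
      ∀ A : lp (fun _ : Γ => ℂ) 2 →L[ℂ] lp (fun _ : Γ => ℂ) 2,
        (∀ (ξ : lp (fun _ : Γ => ℂ) 2) (g : Γ), A ξ g = ∑ s ∈ S, ξ (g * s)) →
        ∃ a b : Fin N → ℝ,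
          (∀ i, a i < b i) ∧
          (∀ i j : Fin N, i < j → b i < a j) ∧
          spectrum ℂ A =
            ⋃ i : Fin N, (fun x : ℝ => (x : ℂ)) '' Set.Icc (a i) (b i) := by
  obtain ⟨m, rfl⟩ : ∃ m, N = m + 1 := ⟨N - 1, by omega⟩
  refine ⟨Band.G m, inferInstance, Band.S m,
    ⟨Band.el 1 0, Finset.mem_image.2 ⟨Sum.inl true, Finset.mem_univ _, rfl⟩⟩,
    Band.closure_S m, Band.inv_S m, Band.one_S m, fun A hA => ?_⟩
  refine ⟨fun i => 5 * (i : ℕ) - m - 2, fun i => 5 * (i : ℕ) - m + 2, fun i => by linarith,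
    fun i j hij => ?_, ?_⟩
  · have : ((i : ℕ) : ℝ) + 1 ≤ (j : ℕ) := by exact_mod_cast hij
    simp only
    linarith
  · rw [Band.main m A hA]
    ext μ
    simp only [Set.mem_setOf_eq, Set.mem_iUnion, Set.mem_image]
    constructor
    · rintro ⟨k, hk, x, hx, rfl⟩
      refine ⟨⟨k, by omega⟩, _, ⟨?_, ?_⟩, rfl⟩
      · simp only; linarith [hx.1]
      · simp only; linarith [hx.2]
    · rintro ⟨i, y, hy, rfl⟩
      refine ⟨i, by omega, y - (5 * (i : ℕ) - m), ⟨?_, ?_⟩, ?_⟩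
      · linarith [hy.1]
      · linarith [hy.2]
      · rw [sub_add_cancel]
end
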